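/- Let σ₁ > 1 and σ₂ = 1/2, and set s₁ = σ₁ + it, s₂ = 1/2 + it. Then ∫₂^T |ζ₂(s₁, s₂)|² dt ≍ T log T as T → ∞. -/

import Mathlib

open Complex Filter Asymptotics Real

/-- The singular set of the Euler double zeta function: `s₂ = 1` or
`s₁ + s₂ ∈ {2, 1, 0, -2, -4, -6, …}`. -/
def zeta2Sing (p : ℂ × ℂ) : Prop :=
  p.2 = 1 ∨ p.1 + p.2 = 2 ∨ p.1 + p.2 = 1 ∨ ∃ k : ℕ, p.1 + p.2 = -2 * (k : ℂ)

/-! Write `P_m(s) = ∑_{n ≤ m} n^{-s} + m^{1-s} / (s - 1)` for the Euler–Maclaurin approximation to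
`ζ(s)`. Since `∑_{n > m} n^{-s₂} = ζ(s₂) - P_m(s₂) + m^{1-s₂} / (s₂ - 1)`, summing over `m` against
`m^{-s₁}` gives
`ζ₂(s₁, s₂) = ζ(s₁) ζ(s₂) + ζ(s₁ + s₂ - 1) / (s₂ - 1) - ∑_m m^{-s₁} P_m(s₂)`,
a rewriting of the harmonic product `ζ(s₁) ζ(s₂) = ζ₂(s₁, s₂) + ζ₂(s₂, s₁) + ζ(s₁ + s₂)` that
continues to `re s₂ > 0` and only involves `ζ` and the `P_m`. For `re s₁ > 1` the factor `ζ(s₁)`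
lies between two positive constants, so the first term has mean square `≍ T log T` on the critical
line, and the second term is bounded. The last one is negligible: by Cauchy–Schwarz its mean square
is at most `(∑_m m^{-σ₁}) ∑_m m^{-σ₁} M_m(T)`, where the mean square `M_m(T)` of `P_m` is `O(T)` for
each `m` and `O(T log T)` uniformly in `m`, so dominated convergence makes the sum `o(T log T)`.

The mean squares of `ζ` and `P_m` are computed against the Fejér weight `1 - t / T`, whose cosine
transform is nonnegative. A lower bound for Dirichlet polynomials with nonnegative coefficients
comes from the diagonal alone; an upper bound comes from Schur's test, and applies as well to the
integral remainder `ζ - P_m`. -/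

open MeasureTheory Set Topology

section OscillatoryIntegral

lemma sinc_sq_le (x : ℝ) : Real.sinc x ^ 2 ≤ 2 / (1 + x ^ 2) := by
  have h_one : Real.sinc x ^ 2 ≤ 1 := (sq_le_one_iff_abs_le_one _).2 (Real.abs_sinc_le_one x)
  have h_sin : x ^ 2 * Real.sinc x ^ 2 ≤ 1 := by
    rcases eq_or_ne x 0 with rfl | hx
    · simp
    · rw [Real.sinc_of_ne_zero hx, ← mul_pow, mul_div_cancel₀ _ hx]
      exact Real.sin_sq_le_one x
  rw [le_div_iff₀ (by positivity)]
  linarith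

lemma norm_mul_sinc_sq_le {T : ℝ} (c : ℝ) (hT : 0 ≤ T) (x : ℝ) :
    ‖c * (2 * T / 2 * Real.sinc (2 * T * x / 2) ^ 2)‖ ≤ 2 * T * (|c| * (1 + (T * x) ^ 2)⁻¹) := by
  rw [mul_assoc 2 T x, mul_div_cancel_left₀ _ two_ne_zero, mul_div_cancel_left₀ _ two_ne_zero,
    norm_mul, Real.norm_eq_abs, Real.norm_of_nonneg (by positivity)]
  calc |c| * (T * Real.sinc (T * x) ^ 2) ≤ |c| * (T * (2 / (1 + (T * x) ^ 2))) := by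
        gcongr
        exact sinc_sq_le _
    _ = _ := by ring

lemma integral_one_sub_div_mul_cos {T : ℝ} (hT : T ≠ 0) (l : ℝ) :
    ∫ t in (0 : ℝ)..T, (1 - t / T) * Real.cos (l * t) = T / 2 * Real.sinc (T * l / 2) ^ 2 := by
  rcases eq_or_ne l 0 with rfl | hl
  · have hderiv (t : ℝ) : HasDerivAt (fun t => t - t ^ 2 / (2 * T)) (1 - t / T) t := by
      refine ((hasDerivAt_id t).sub ((hasDerivAt_pow 2 t).div_const (2 * T))).congr_deriv ?_
      field_simp
      ring
    simp only [zero_mul, Real.cos_zero, mul_one, mul_zero, zero_div, Real.sinc_zero, one_pow]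
    rw [intervalIntegral.integral_eq_sub_of_hasDerivAt (fun t _ => hderiv t)
      (Continuous.intervalIntegrable (by fun_prop) _ _)]
    field_simp
    ring
  · have hderiv (t : ℝ) : HasDerivAt
        (fun t => (1 - t / T) * Real.sin (l * t) / l - Real.cos (l * t) / (l ^ 2 * T))
        ((1 - t / T) * Real.cos (l * t)) t := by
      have hlin : HasDerivAt (fun t => l * t) l t := by simpa using (hasDerivAt_id t).const_mul l
      have hweight : HasDerivAt (fun t => 1 - t / T) (-(1 / T)) t :=
        ((hasDerivAt_id t).div_const T).const_sub 1
      refine (((hweight.mul hlin.sin).div_const l).sub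
        (hlin.cos.div_const (l ^ 2 * T))).congr_deriv ?_
      field_simp
      ring
    have hcos : Real.cos (l * T) = 1 - 2 * Real.sin (T * l / 2) ^ 2 := by
      rw [Real.sin_sq_eq_half_sub, mul_div_cancel₀ _ two_ne_zero, mul_comm T]
      ring
    rw [intervalIntegral.integral_eq_sub_of_hasDerivAt (fun t _ => hderiv t)
      (Continuous.intervalIntegrable (by fun_prop) _ _), hcos,
      Real.sinc_of_ne_zero (by positivity)]
    simp only [mul_zero, Real.sin_zero, Real.cos_zero]
    field_simp
    ring

variable {X : Type*} [MeasurableSpace X] {μ : Measure X} {G φ a b : X → ℝ} {C T : ℝ}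

/-- The oscillatory integral `∫ G(x) e^{-itφ(x)} dμ(x)`. With `φ = log`, a counting measure gives
Dirichlet polynomials on a vertical line, and Lebesgue measure gives Mellin transforms. -/
noncomputable def oscIntegral (μ : Measure X) (G φ : X → ℝ) (t : ℝ) : ℂ :=
  ∫ x, (G x : ℂ) * cexp (-(t * φ x : ℝ) * I) ∂μ

lemma norm_oscillation (x t : ℝ) : ‖cexp (-(t * x : ℝ) * I)‖ = 1 := by
  rw [← ofReal_neg, norm_exp_ofReal_mul_I]

lemma integrable_oscIntegrand (hG : Integrable G μ) (hφ : Measurable φ) (t : ℝ) :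
    Integrable (fun x => (G x : ℂ) * cexp (-(t * φ x : ℝ) * I)) μ :=
  hG.ofReal.mul_bdd (c := 1) (by fun_prop)
    (ae_of_all _ fun x => (norm_oscillation (φ x) t).le)

lemma continuous_oscIntegral (hG : Integrable G μ) (hφ : Measurable φ) :
    Continuous (oscIntegral μ G φ) := by
  refine continuous_of_dominated (bound := fun x => ‖G x‖)
    (fun t => (integrable_oscIntegrand hG hφ t).aestronglyMeasurable)
    (fun t => ae_of_all _ fun x => ?_) hG.norm (ae_of_all _ fun x => by fun_prop)
  rw [norm_mul, norm_oscillation, mul_one, norm_real]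

variable [SFinite μ]

lemma norm_sq_oscIntegral (hG : Integrable G μ) (hφ : Measurable φ) (t : ℝ) :
    ‖oscIntegral μ G φ t‖ ^ 2 =
      ∫ z : X × X, G z.1 * G z.2 * Real.cos ((φ z.1 - φ z.2) * t) ∂μ.prod μ := by
  set f : X → ℂ := fun x => (G x : ℂ) * cexp (-(t * φ x : ℝ) * I) with hf
  have hint : Integrable f μ := integrable_oscIntegrand hG hφ t
  have hconj : Integrable (fun x => (starRingEnd ℂ) (f x)) μ :=
    conjCLE.toContinuousLinearMap.integrable_comp hint
  have hre (z : X × X) : (f z.1 * (starRingEnd ℂ) (f z.2)).re =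
      G z.1 * G z.2 * Real.cos ((φ z.1 - φ z.2) * t) := by
    have hmul : f z.1 * (starRingEnd ℂ) (f z.2) =
        ((G z.1 * G z.2 : ℝ) : ℂ) * cexp ((-((φ z.1 - φ z.2) * t) : ℝ) * I) := by
      simp only [hf, map_mul, conj_ofReal, ← exp_conj, map_neg, conj_I]
      rw [mul_mul_mul_comm, ← Complex.exp_add]
      push_cast
      ring_nf
    rw [hmul, re_ofReal_mul, exp_ofReal_mul_I_re, Real.cos_neg]
  calc ‖oscIntegral μ G φ t‖ ^ 2
      = ((∫ x, f x ∂μ) * (starRingEnd ℂ) (∫ x, f x ∂μ)).re := by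
        rw [mul_conj, ofReal_re, normSq_eq_norm_sq, oscIntegral]
    _ = (∫ z : X × X, f z.1 * (starRingEnd ℂ) (f z.2) ∂μ.prod μ).re := by
        rw [← integral_conj, ← integral_prod_mul]
    _ = _ := by
        simp_rw [← hre]
        exact (integral_re (hint.mul_prod hconj)).symm

lemma integral_one_sub_div_mul_norm_sq_oscIntegral (hG : Integrable G μ) (hφ : Measurable φ)
    (hT : 0 < T) :
    ∫ t in (0 : ℝ)..T, (1 - t / T) * ‖oscIntegral μ G φ t‖ ^ 2 =
      ∫ z : X × X, G z.1 * G z.2 * (T / 2 * Real.sinc (T * (φ z.1 - φ z.2) / 2) ^ 2)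
        ∂μ.prod μ := by
  have hweight : ∀ᵐ t : ℝ ∂volume.restrict (uIoc 0 T), ‖1 - t / T‖ ≤ 1 := by
    filter_upwards [ae_restrict_mem measurableSet_uIoc] with t ht
    rw [uIoc_of_le hT.le] at ht
    have h_le : t / T ≤ 1 := (div_le_one hT).2 ht.2
    have h_nonneg : 0 ≤ t / T := div_nonneg ht.1.le hT.le
    rw [Real.norm_eq_abs, abs_le]
    constructor <;> linarith
  have hint : Integrable (Function.uncurry fun (t : ℝ) (z : X × X) =>
      G z.1 * G z.2 * ((1 - t / T) * Real.cos ((φ z.1 - φ z.2) * t)))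
      ((volume.restrict (uIoc 0 T)).prod (μ.prod μ)) := by
    have hone : Integrable (fun _ : ℝ => (1 : ℝ)) (volume.restrict (uIoc 0 T)) := by
      simp [uIoc_of_le hT.le]
    refine ((hone.mul_prod (hG.mul_prod hG)).mul_bdd (c := 1)
      (g := fun p => (1 - p.1 / T) * Real.cos ((φ p.2.1 - φ p.2.2) * p.1))
      (by fun_prop) ?_).congr (ae_of_all _ fun p => ?_)
    · filter_upwards [Measure.quasiMeasurePreserving_fst.ae hweight] with p hp
      rw [norm_mul]
      exact mul_le_one₀ hp (norm_nonneg _) (Real.abs_cos_le_one _)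
    · simp only [one_mul, Function.uncurry]
  calc ∫ t in (0 : ℝ)..T, (1 - t / T) * ‖oscIntegral μ G φ t‖ ^ 2
      = ∫ t in (0 : ℝ)..T, ∫ z : X × X,
          G z.1 * G z.2 * ((1 - t / T) * Real.cos ((φ z.1 - φ z.2) * t)) ∂μ.prod μ := by
        congr 1 with t
        rw [norm_sq_oscIntegral hG hφ, ← integral_const_mul]
        congr 1 with z
        ring
    _ = _ := by
        rw [intervalIntegral_integral_swap hint]
        simp_rw [intervalIntegral.integral_const_mul, integral_one_sub_div_mul_cos hT.ne']

lemma abs_mul_le_of_sq_le_mul {x₁ x₂ a₁ a₂ b₁ b₂ : ℝ} (ha₁ : 0 ≤ a₁) (hb₁ : 0 ≤ b₁)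
    (ha₂ : 0 ≤ a₂) (hb₂ : 0 ≤ b₂) (hx₁ : x₁ ^ 2 ≤ a₁ * b₁) (hx₂ : x₂ ^ 2 ≤ a₂ * b₂) :
    |x₁ * x₂| ≤ (a₁ * b₂ + a₂ * b₁) / 2 := by
  refine abs_le_of_sq_le_sq ?_ (by positivity)
  calc (x₁ * x₂) ^ 2 = x₁ ^ 2 * x₂ ^ 2 := mul_pow _ _ _
    _ ≤ (a₁ * b₁) * (a₂ * b₂) := by gcongr
    _ ≤ ((a₁ * b₂ + a₂ * b₁) / 2) ^ 2 := by linarith [sq_nonneg (a₁ * b₂ - a₂ * b₁)]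

lemma integral_prod_abs_mul_le_of_schur {k : X → X → ℝ} (ha : Integrable a μ)
    (hb : AEStronglyMeasurable b μ) (hk : Measurable (Function.uncurry k))
    (hk_nonneg : ∀ x y, 0 ≤ k x y) (hk_symm : ∀ x y, k x y = k y x)
    (hGab : ∀ᵐ x ∂μ, 0 ≤ a x ∧ 0 ≤ b x ∧ G x ^ 2 ≤ a x * b x)
    (hC : ∀ᵐ x ∂μ, Integrable (fun y => b y * k x y) μ ∧ ∫ y, b y * k x y ∂μ ≤ C) :
    ∫ z : X × X, |G z.1 * G z.2| * k z.1 z.2 ∂μ.prod μ ≤ C * ∫ x, a x ∂μ := by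
  set f : X × X → ℝ := fun z => a z.1 * (b z.2 * k z.1 z.2)
  have hf_meas : AEStronglyMeasurable f (μ.prod μ) :=
    ha.aestronglyMeasurable.comp_fst.mul (hb.comp_snd.mul hk.aestronglyMeasurable)
  have hf_row : ∀ᵐ x ∂μ, ∫ y, f (x, y) ∂μ ≤ a x * C := by
    filter_upwards [hC, hGab] with x hx hax
    simp only [f, integral_const_mul]
    exact mul_le_mul_of_nonneg_left hx.2 hax.1
  have hf_int : Integrable f (μ.prod μ) := by
    rw [integrable_prod_iff hf_meas]
    refine ⟨hC.mono fun x hx => hx.1.const_mul (a x), (ha.mul_const C).mono'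
      hf_meas.norm.integral_prod_right' ?_⟩
    filter_upwards [hf_row, hGab] with x hx hax
    rw [Real.norm_of_nonneg (integral_nonneg fun y => norm_nonneg _)]
    refine le_of_eq_of_le (integral_congr_ae ?_) hx
    filter_upwards [hGab] with y hy
    exact Real.norm_of_nonneg (mul_nonneg hax.1 (mul_nonneg hy.2.1 (hk_nonneg x y)))
  have hf_le : ∫ z, f z ∂μ.prod μ ≤ C * ∫ x, a x ∂μ := by
    rw [integral_prod _ hf_int, mul_comm C, ← integral_mul_const]
    exact integral_mono_ae hf_int.integral_prod_left (ha.mul_const C) hf_row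
  have hswap_int : Integrable (fun z => f z.swap) (μ.prod μ) := hf_int.swap
  have hGG_le : ∀ᵐ z ∂μ.prod μ, |G z.1 * G z.2| * k z.1 z.2 ≤ (f z + f z.swap) / 2 := by
    filter_upwards [Measure.quasiMeasurePreserving_fst.ae hGab,
      Measure.quasiMeasurePreserving_snd.ae hGab] with z ⟨ha₁, hb₁, hG₁⟩ ⟨ha₂, hb₂, hG₂⟩
    have := mul_le_mul_of_nonneg_right (abs_mul_le_of_sq_le_mul ha₁ hb₁ ha₂ hb₂ hG₁ hG₂)
      (hk_nonneg z.1 z.2)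
    simp only [f, Prod.fst_swap, Prod.snd_swap, hk_symm z.2 z.1]
    linarith
  calc _ ≤ ∫ z : X × X, (f z + f z.swap) / 2 ∂μ.prod μ :=
        integral_mono_of_nonneg (ae_of_all _ fun z => mul_nonneg (abs_nonneg _) (hk_nonneg _ _))
          ((hf_int.add hswap_int).div_const 2) hGG_le
    _ = ∫ z, f z ∂μ.prod μ := by
        rw [integral_div, integral_add hf_int hswap_int, integral_prod_swap f]
        ring
    _ ≤ _ := hf_le

lemma integral_le_two_mul_integral_one_sub_div_mul {f : ℝ → ℝ} (hf : Continuous f)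
    (hf_nonneg : ∀ t, 0 ≤ f t) (hT : 0 < T) :
    ∫ t in (0 : ℝ)..T, f t ≤ 2 * ∫ t in (0 : ℝ)..2 * T, (1 - t / (2 * T)) * f t := by
  have hint (c d : ℝ) : IntervalIntegrable (fun t => 2 * ((1 - t / (2 * T)) * f t)) volume c d :=
    Continuous.intervalIntegrable (by fun_prop) _ _
  rw [← intervalIntegral.integral_const_mul,
    ← intervalIntegral.integral_add_adjacent_intervals (hint 0 T) (hint T (2 * T))]
  refine le_add_of_le_of_nonneg (intervalIntegral.integral_mono_on hT.le
    (hf.intervalIntegrable _ _) (hint _ _) fun t ht => ?_)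
    (intervalIntegral.integral_nonneg (by linarith) fun t ht => ?_)
  · have : t / (2 * T) ≤ 1 / 2 := by
      rw [div_le_iff₀ (by positivity)]
      linarith [ht.2]
    nlinarith [hf_nonneg t]
  · have : t / (2 * T) ≤ 1 := (div_le_one (by positivity)).2 ht.2
    exact mul_nonneg zero_le_two (mul_nonneg (by linarith) (hf_nonneg t))

lemma integral_norm_sq_oscIntegral_le (hG : Integrable G μ) (hφ : Measurable φ)
    (ha : Integrable a μ) (hb : AEStronglyMeasurable b μ)
    (hGab : ∀ᵐ x ∂μ, 0 ≤ a x ∧ 0 ≤ b x ∧ G x ^ 2 ≤ a x * b x) (hT : 0 < T)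
    (hC : ∀ᵐ x ∂μ, Integrable (fun y => b y * (1 + (T * (φ x - φ y)) ^ 2)⁻¹) μ ∧
      ∫ y, b y * (1 + (T * (φ x - φ y)) ^ 2)⁻¹ ∂μ ≤ C) :
    ∫ t in (0 : ℝ)..T, ‖oscIntegral μ G φ t‖ ^ 2 ≤ 4 * T * C * ∫ x, a x ∂μ := by
  have hkernel : Integrable (fun z : X × X => |G z.1 * G z.2| *
      (1 + (T * (φ z.1 - φ z.2)) ^ 2)⁻¹) (μ.prod μ) := by
    refine (hG.mul_prod hG).abs.mul_bdd (c := 1)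
      (Measurable.aestronglyMeasurable (by fun_prop)) (ae_of_all _ fun z => ?_)
    rw [Real.norm_of_nonneg (by positivity)]
    exact inv_le_one_of_one_le₀ (le_add_of_nonneg_right (sq_nonneg _))
  have hschur : ∫ z : X × X, |G z.1 * G z.2| * (1 + (T * (φ z.1 - φ z.2)) ^ 2)⁻¹ ∂μ.prod μ
      ≤ C * ∫ x, a x ∂μ :=
    integral_prod_abs_mul_le_of_schur (k := fun x y => (1 + (T * (φ x - φ y)) ^ 2)⁻¹) ha hb
      (by fun_prop) (fun x y => by positivity) (fun x y => by ring) hGab hC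
  have hfejer : ∫ z : X × X, G z.1 * G z.2 *
        (2 * T / 2 * Real.sinc (2 * T * (φ z.1 - φ z.2) / 2) ^ 2) ∂μ.prod μ
      ≤ ∫ z : X × X, 2 * T * (|G z.1 * G z.2| * (1 + (T * (φ z.1 - φ z.2)) ^ 2)⁻¹) ∂μ.prod μ := by
    refine (Real.le_norm_self _).trans (norm_integral_le_of_norm_le (hkernel.const_mul _)
      (ae_of_all _ fun z => ?_))
    exact norm_mul_sinc_sq_le (G z.1 * G z.2) hT.le (φ z.1 - φ z.2)
  calc ∫ t in (0 : ℝ)..T, ‖oscIntegral μ G φ t‖ ^ 2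
      ≤ 2 * ∫ t in (0 : ℝ)..2 * T, (1 - t / (2 * T)) * ‖oscIntegral μ G φ t‖ ^ 2 :=
        integral_le_two_mul_integral_one_sub_div_mul
          ((continuous_oscIntegral hG hφ).norm.pow 2) (fun t => sq_nonneg _) hT
    _ ≤ 2 * (2 * T * (C * ∫ x, a x ∂μ)) := by
        rw [integral_one_sub_div_mul_norm_sq_oscIntegral hG hφ (by positivity)]
        refine mul_le_mul_of_nonneg_left (hfejer.trans ?_) zero_le_two
        rw [integral_const_mul]
        exact mul_le_mul_of_nonneg_left hschur (by positivity)
    _ = 4 * T * C * ∫ x, a x ∂μ := by ring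

end OscillatoryIntegral

section MeanValue

variable {T : ℝ}

lemma summable_inv_one_add_sq : Summable fun j : ℤ => (1 + (j : ℝ) ^ 2)⁻¹ := by
  refine ((Real.summable_one_div_int_pow (p := 2)).2 one_lt_two).of_norm_bounded_eventually
    (Set.Finite.subset (Set.finite_singleton 0) fun j hj => ?_)
  by_contra hj_ne
  refine hj ?_
  have : (0 : ℝ) < (j : ℝ) ^ 2 := by
    have : (j : ℝ) ≠ 0 := Int.cast_ne_zero.2 hj_ne
    positivity
  change ‖_‖ ≤ _
  rw [Real.norm_of_nonneg (by positivity), one_div]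
  gcongr
  linarith

lemma abs_sub_le_mul_abs_log_sub_log {x y N : ℝ} (hx : 0 < x) (hy : 0 < y) (hxN : x ≤ N)
    (hyN : y ≤ N) : |x - y| ≤ N * |Real.log x - Real.log y| := by
  wlog hxy : y ≤ x generalizing x y
  · rw [abs_sub_comm, abs_sub_comm (Real.log x)]
    exact this hy hx hyN hxN (le_of_not_ge hxy)
  have hlog : 1 - y / x ≤ Real.log x - Real.log y := by
    rw [← Real.log_div hx.ne' hy.ne', ← inv_div]
    exact Real.one_sub_inv_le_log_of_pos (div_pos hx hy)
  have h_nonneg : 0 ≤ 1 - y / x := sub_nonneg.2 ((div_le_one hx).2 hxy)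
  rw [abs_of_nonneg (sub_nonneg.2 hxy), abs_of_nonneg (h_nonneg.trans hlog)]
  calc x - y = x * (1 - y / x) := by field_simp
    _ ≤ N * (Real.log x - Real.log y) := mul_le_mul hxN hlog h_nonneg (hx.le.trans hxN)

lemma sum_inv_one_add_sq_log_sub_log_le {n N : ℕ} (hn : n ∈ Finset.Icc 1 N) (hT : (N : ℝ) ≤ T) :
    ∑ k ∈ Finset.Icc 1 N, (1 + (T * (Real.log n - Real.log k)) ^ 2)⁻¹ ≤
      ∑' j : ℤ, (1 + (j : ℝ) ^ 2)⁻¹ := by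
  have hcast {k : ℕ} (hk : k ∈ Finset.Icc 1 N) : (0 : ℝ) < k ∧ (k : ℝ) ≤ T := by
    rw [Finset.mem_Icc] at hk
    exact ⟨by exact_mod_cast hk.1, (Nat.cast_le.2 hk.2).trans hT⟩
  have hinj : Set.InjOn (fun k : ℕ => (n - k : ℤ)) (Finset.Icc 1 N) :=
    fun k _ l _ h => by simpa using h
  calc ∑ k ∈ Finset.Icc 1 N, (1 + (T * (Real.log n - Real.log k)) ^ 2)⁻¹
      ≤ ∑ k ∈ Finset.Icc 1 N, (1 + (((n - k : ℤ) : ℝ)) ^ 2)⁻¹ := by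
        refine Finset.sum_le_sum fun k hk => ?_
        have habs := abs_sub_le_mul_abs_log_sub_log (hcast hn).1 (hcast hk).1 (hcast hn).2
          (hcast hk).2
        nth_rewrite 1 [← abs_of_pos ((hcast hn).1.trans_le (hcast hn).2)] at habs
        rw [← abs_mul] at habs
        push_cast
        gcongr ?_⁻¹
        exact add_le_add_right (sq_le_sq.2 habs) 1
    _ = ∑ j ∈ (Finset.Icc 1 N).image (fun k : ℕ => (n - k : ℤ)), (1 + (j : ℝ) ^ 2)⁻¹ :=
        (Finset.sum_image (f := fun j : ℤ => (1 + (j : ℝ) ^ 2)⁻¹) hinj).symm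
    _ ≤ _ := summable_inv_one_add_sq.sum_le_tsum _ fun j _ => by positivity

lemma oscIntegral_count {ι : Type*} (s : Finset ι) [MeasurableSpace s]
    [MeasurableSingletonClass s] (c φ : ι → ℝ) (t : ℝ) :
    oscIntegral Measure.count (fun i : s => c i) (fun i => φ i) t =
      ∑ i ∈ s, (c i : ℂ) * cexp (-(t * φ i : ℝ) * I) := by
  rw [oscIntegral, integral_count]
  exact Finset.sum_coe_sort s fun i => (c i : ℂ) * cexp (-(t * φ i : ℝ) * I)

lemma integral_norm_sq_sum_le {N : ℕ} (c : ℕ → ℝ) (hT : 0 < T) (hNT : (N : ℝ) ≤ T) :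
    ∫ t in (0 : ℝ)..T, ‖∑ n ∈ Finset.Icc 1 N, (c n : ℂ) * cexp (-(t * Real.log n : ℝ) * I)‖ ^ 2 ≤
      4 * T * (∑' j : ℤ, (1 + (j : ℝ) ^ 2)⁻¹) * ∑ n ∈ Finset.Icc 1 N, c n ^ 2 := by
  have hupper := integral_norm_sq_oscIntegral_le (X := Finset.Icc 1 N) (μ := Measure.count)
    (G := fun n => c n) (φ := fun n => Real.log n) (a := fun n => c n ^ 2) (b := fun _ => 1)
    (C := ∑' j : ℤ, (1 + (j : ℝ) ^ 2)⁻¹) .of_finite .of_discrete .of_finite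
    aestronglyMeasurable_const
    (ae_of_all _ fun n => ⟨sq_nonneg _, zero_le_one, (mul_one _).ge⟩) hT
    (ae_of_all _ fun n => ⟨.of_finite, ?_⟩)
  · simpa only [oscIntegral_count _ c fun n => Real.log n, integral_count,
      Finset.sum_coe_sort _ fun n : ℕ => c n ^ 2] using hupper
  · simp only [one_mul, integral_count]
    rw [Finset.sum_coe_sort _ fun k : ℕ => (1 + (T * (Real.log n - Real.log k)) ^ 2)⁻¹]
    exact sum_inv_one_add_sq_log_sub_log_le n.2 hNT

lemma half_mul_sum_sq_le_integral_norm_sq {ι : Type*} (s : Finset ι) {c : ι → ℝ} (φ : ι → ℝ)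
    (hc : ∀ i ∈ s, 0 ≤ c i) (hT : 0 < T) :
    T / 2 * ∑ i ∈ s, c i ^ 2 ≤
      ∫ t in (0 : ℝ)..T, ‖∑ i ∈ s, (c i : ℂ) * cexp (-(t * φ i : ℝ) * I)‖ ^ 2 := by
  let _ : MeasurableSpace s := ⊤
  simp only [← oscIntegral_count]
  calc T / 2 * ∑ i ∈ s, c i ^ 2
      = ∑ i : s, c i * c i * (T / 2 * Real.sinc (T * (φ i - φ i) / 2) ^ 2) := by
        rw [Finset.mul_sum, ← Finset.sum_coe_sort]
        refine Finset.sum_congr rfl fun i _ => ?_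
        simp only [sub_self, mul_zero, zero_div, Real.sinc_zero]
        ring
    _ ≤ ∑ i : s, ∑ j : s, c i * c j * (T / 2 * Real.sinc (T * (φ i - φ j) / 2) ^ 2) := by
        refine Finset.sum_le_sum fun i _ => Finset.single_le_sum
          (f := fun j : s => c i * c j * (T / 2 * Real.sinc (T * (φ i - φ j) / 2) ^ 2))
          (fun j _ => ?_) (Finset.mem_univ i)
        have := hc i i.2
        have := hc j j.2
        positivity
    _ = ∫ t in (0 : ℝ)..T, (1 - t / T) *
          ‖oscIntegral Measure.count (fun i : s => c i) (fun i => φ i) t‖ ^ 2 := by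
        rw [integral_one_sub_div_mul_norm_sq_oscIntegral .of_finite .of_discrete hT,
          integral_prod _ .of_finite, integral_count]
        simp only [integral_count]
    _ ≤ _ := by
        have hcont := continuous_oscIntegral (μ := Measure.count) (G := fun i : s => c i)
          (φ := fun i => φ i) .of_finite .of_discrete
        refine intervalIntegral.integral_mono_on hT.le
          (Continuous.intervalIntegrable (by fun_prop) _ _)
          (Continuous.intervalIntegrable (by fun_prop) _ _) fun t ht => ?_
        exact mul_le_of_le_one_left (sq_nonneg _)
          (sub_le_self 1 (div_nonneg ht.1 hT.le))

lemma integrableOn_and_integral_Ioi_inv_mul_le {M : ℝ} (hM : 0 < M) (hT : 0 < T) (u : ℝ) :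
    IntegrableOn (fun y => y⁻¹ * (1 + (T * (u - Real.log y)) ^ 2)⁻¹) (Ioi M) ∧
      ∫ y in Ioi M, y⁻¹ * (1 + (T * (u - Real.log y)) ^ 2)⁻¹ ≤ π / T := by
  have hderiv : ∀ y ∈ Ici M, HasDerivAt (fun y => Real.arctan (T * (Real.log y - u)) / T)
      (y⁻¹ * (1 + (T * (u - Real.log y)) ^ 2)⁻¹) y := fun y hy => by
    have hy : 0 < y := hM.trans_le hy
    refine ((((Real.hasDerivAt_log hy.ne').sub_const u).const_mul T).arctan.div_const
      T).congr_deriv ?_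
    rw [show (T * (Real.log y - u)) ^ 2 = (T * (u - Real.log y)) ^ 2 by ring]
    field_simp
  have hlim : Tendsto (fun y => Real.arctan (T * (Real.log y - u)) / T) atTop
      (𝓝 (π / 2 / T)) := by
    refine Tendsto.div_const ((tendsto_nhds_of_tendsto_nhdsWithin Real.tendsto_arctan_atTop).comp
      (Tendsto.const_mul_atTop hT ?_)) T
    exact tendsto_atTop_add_const_right _ _ Real.tendsto_log_atTop
  have hnonneg : ∀ y ∈ Ioi M, 0 ≤ y⁻¹ * (1 + (T * (u - Real.log y)) ^ 2)⁻¹ := fun y hy => by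
    have : 0 < y := hM.trans hy
    positivity
  refine ⟨integrableOn_Ioi_deriv_of_nonneg' hderiv hnonneg hlim, ?_⟩
  rw [integral_Ioi_of_hasDerivAt_of_nonneg' hderiv hnonneg hlim, ← sub_div]
  gcongr
  linarith [Real.neg_pi_div_two_lt_arctan (T * (Real.log M - u))]

lemma integral_norm_sq_oscIntegral_Ioi_log_le {M : ℝ} {G : ℝ → ℝ} (hM : 0 < M)
    (hG : IntegrableOn G (Ioi M)) (hG_sq : IntegrableOn (fun x => x * G x ^ 2) (Ioi M))
    (hT : 0 < T) :
    ∫ t in (0 : ℝ)..T, ‖oscIntegral (volume.restrict (Ioi M)) G Real.log t‖ ^ 2 ≤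
      4 * π * ∫ x in Ioi M, x * G x ^ 2 := by
  refine (integral_norm_sq_oscIntegral_le hG Real.measurable_log hG_sq (b := fun x => x⁻¹)
    (Measurable.aestronglyMeasurable (by fun_prop)) ?_ hT
    (ae_of_all _ fun x => integrableOn_and_integral_Ioi_inv_mul_le hM hT (Real.log x))).trans_eq ?_
  · filter_upwards [ae_restrict_mem measurableSet_Ioi] with x hx
    have hx : 0 < x := hM.trans hx
    refine ⟨by positivity, by positivity, le_of_eq ?_⟩
    field_simp
  · field_simp

end MeanValue

section ZetaApproximation

variable {N : ℕ} {s : ℂ}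

/-- The Euler–Maclaurin approximation `∑_{n ≤ N} n^{-s} + N^{1-s} / (s - 1)` to `ζ(s)`, meaningful
for `s ≠ 1` with `0 < re s`. -/
noncomputable def zetaApprox (N : ℕ) (s : ℂ) : ℂ :=
  ∑ n ∈ Finset.Icc 1 N, (n : ℂ) ^ (-s) + (N : ℂ) ^ (1 - s) / (s - 1)

/-- The integral `∫_N^∞ {x} x^{-s-1} dx` governing the error `ζ(s) - zetaApprox N s`. -/
noncomputable def zetaTail (N : ℕ) (s : ℂ) : ℂ :=
  ∫ x in Ioi (N : ℝ), ((Int.fract x : ℝ) : ℂ) * (x : ℂ) ^ (-(s + 1))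

lemma tsum_add_succ_cpow_neg (hs : 1 < s.re) (N : ℕ) :
    ∑' n : ℕ, ((N : ℂ) + ((n : ℂ) + 1)) ^ (-s) =
      riemannZeta s - ∑ n ∈ Finset.Icc 1 N, (n : ℂ) ^ (-s) := by
  have hs_ne : -s ≠ 0 := neg_ne_zero.2 (ne_zero_of_one_lt_re hs)
  have hsum : Summable fun n : ℕ => (n : ℂ) ^ (-s) := by
    simpa only [cpow_neg, one_div] using Complex.summable_one_div_nat_cpow.2 hs
  have hzeta : riemannZeta s = ∑' n : ℕ, (n : ℂ) ^ (-s) := by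
    simpa only [cpow_neg, one_div] using zeta_eq_tsum_one_div_nat_cpow hs
  have hrange : ∑ n ∈ Finset.range (N + 1), (n : ℂ) ^ (-s) =
      ∑ n ∈ Finset.Icc 1 N, (n : ℂ) ^ (-s) := by
    rw [Finset.sum_range_succ', Nat.cast_zero, zero_cpow hs_ne, add_zero, Finset.range_eq_Ico,
      Finset.sum_Ico_add' (fun n : ℕ => (n : ℂ) ^ (-s)), zero_add, Finset.Ico_add_one_right_eq_Icc]
  rw [hzeta, ← hsum.sum_add_tsum_nat_add (N + 1), hrange, add_sub_cancel_left]
  refine tsum_congr fun n => ?_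
  push_cast
  ring_nf

lemma LSeries_indicator_Ioi (hs : 1 < s.re) (N : ℕ) :
    LSeries ((Ioi N).indicator 1) s =
      riemannZeta s - ∑ n ∈ Finset.Icc 1 N, (n : ℂ) ^ (-s) := by
  have hsum : Summable (LSeries.term ((Ioi N).indicator 1) s) :=
    LSeriesSummable_of_bounded_of_one_lt_re (m := 1)
      (fun n _ => (norm_indicator_le_norm_self _ _).trans (by simp)) hs
  rw [← tsum_add_succ_cpow_neg hs, LSeries, ← hsum.sum_add_tsum_nat_add (N + 1),
    Finset.sum_eq_zero, zero_add]
  · refine tsum_congr fun n => ?_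
    rw [LSeries.term_of_ne_zero (by lia), indicator_of_mem (mem_Ioi.2 (by lia)), Pi.one_apply,
      cpow_neg, one_div]
    push_cast
    ring_nf
  · intro n hn
    have hn : n ∉ Ioi N := not_lt.2 (Nat.lt_succ_iff.1 (Finset.mem_range.1 hn))
    simp [LSeries.term, indicator_of_notMem hn]

lemma sum_Icc_indicator_Ioi (n N : ℕ) :
    ∑ k ∈ Finset.Icc 1 n, (Ioi N).indicator (1 : ℕ → ℂ) k = ((n - N : ℕ) : ℂ) := by
  rw [← Finset.sum_filter_add_sum_filter_not _ (· ∈ Ioi N),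
    Finset.sum_congr rfl fun k hk => indicator_of_mem (Finset.mem_filter.1 hk).2 _,
    Finset.sum_eq_zero (s := Finset.filter (· ∉ Ioi N) _) fun k hk =>
      indicator_of_notMem (Finset.mem_filter.1 hk).2 _]
  have hfilter : (Finset.Icc 1 n).filter (· ∈ Ioi N) = Finset.Ioc N n := by
    ext k
    simp only [Finset.mem_filter, Finset.mem_Icc, mem_Ioi, Finset.mem_Ioc]
    lia
  rw [hfilter]
  simp

lemma integrableOn_fract_mul_cpow (hN : 0 < N) (hs : 0 < s.re) :
    IntegrableOn (fun x : ℝ => ((Int.fract x : ℝ) : ℂ) * (x : ℂ) ^ (-(s + 1))) (Ioi (N : ℝ)) := by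
  have hcpow : IntegrableOn (fun x : ℝ => (x : ℂ) ^ (-(s + 1))) (Ioi (N : ℝ)) :=
    integrableOn_Ioi_cpow_of_lt (by simpa using hs) (Nat.cast_pos.2 hN)
  refine hcpow.bdd_mul (c := 1)
    (measurable_ofReal.comp measurable_fract).aestronglyMeasurable (ae_of_all _ fun x => ?_)
  rw [norm_real, Real.norm_of_nonneg (Int.fract_nonneg x)]
  exact (Int.fract_lt_one x).le

lemma floor_sub_mul_cpow (s : ℂ) {x : ℝ} (hx : 0 < x) (hNx : N ≤ x) :
    ((⌊x⌋₊ - N : ℕ) : ℂ) * (x : ℂ) ^ (-(s + 1)) =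
      (x : ℂ) ^ (-s) - (N : ℂ) * (x : ℂ) ^ (-(s + 1)) -
        ((Int.fract x : ℝ) : ℂ) * (x : ℂ) ^ (-(s + 1)) := by
  have hcpow : (x : ℂ) ^ (-s) = x * (x : ℂ) ^ (-(s + 1)) := by
    rw [show -s = 1 + -(s + 1) by ring, cpow_add _ _ (ofReal_ne_zero.2 hx.ne'), cpow_one]
  have hfloor : ((⌊x⌋₊ : ℕ) : ℂ) = x - ((Int.fract x : ℝ) : ℂ) := by
    rw [← ofReal_natCast, natCast_floor_eq_intCast_floor hx.le, ← Int.self_sub_fract, ofReal_sub]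
  rw [hcpow, Nat.cast_sub (Nat.le_floor hNx), hfloor]
  ring

lemma setIntegral_floor_sub_mul_cpow (hN : 0 < N) (hs : 1 < s.re) :
    ∫ x in Ioi (N : ℝ), ((⌊x⌋₊ - N : ℕ) : ℂ) * (x : ℂ) ^ (-(s + 1)) =
      (N : ℂ) ^ (1 - s) / (s * (s - 1)) - zetaTail N s := by
  have hN_pos : (0 : ℝ) < N := Nat.cast_pos.2 hN
  have hs_ne : s ≠ 0 := ne_zero_of_one_lt_re hs
  have hs_sub : s - 1 ≠ 0 := sub_ne_zero.2 (ne_of_apply_ne re (by simpa using hs.ne'))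
  have hint : IntegrableOn (fun x : ℝ => (x : ℂ) ^ (-s)) (Ioi (N : ℝ)) :=
    integrableOn_Ioi_cpow_of_lt (by simpa using hs) hN_pos
  have hint' : IntegrableOn (fun x : ℝ => (N : ℂ) * (x : ℂ) ^ (-(s + 1))) (Ioi (N : ℝ)) :=
    (integrableOn_Ioi_cpow_of_lt (by simpa using zero_lt_one.trans hs) hN_pos).const_mul _
  have hpow : (N : ℂ) ^ (1 - s) = N * (N : ℂ) ^ (-s) := by
    rw [sub_eq_add_neg, cpow_add _ _ (Nat.cast_ne_zero.2 hN.ne'), cpow_one]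
  rw [setIntegral_congr_fun measurableSet_Ioi
      fun x hx => floor_sub_mul_cpow s (hN_pos.trans (mem_Ioi.1 hx)) (mem_Ioi.1 hx).le,
    integral_sub (f := fun x : ℝ => (x : ℂ) ^ (-s) - N * (x : ℂ) ^ (-(s + 1))) (hint.sub hint')
      (integrableOn_fract_mul_cpow hN (zero_lt_one.trans hs)), integral_sub hint hint',
    integral_const_mul, integral_Ioi_cpow_of_lt (by simpa using hs) hN_pos,
    integral_Ioi_cpow_of_lt (by simpa using zero_lt_one.trans hs) hN_pos, zetaTail,
    show -s + 1 = 1 - s by ring, show -(s + 1) + 1 = -s by ring, ofReal_natCast, hpow,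
    ← neg_sub s 1]
  field_simp
  ring

lemma zeta_sub_zetaApprox_of_one_lt_re (hN : 0 < N) (hs : 1 < s.re) :
    riemannZeta s - zetaApprox N s = -s * zetaTail N s := by
  have hs_ne : s ≠ 0 := ne_zero_of_one_lt_re hs
  have hs_sub : s - 1 ≠ 0 := sub_ne_zero.2 (ne_of_apply_ne re (by simpa using hs.ne'))
  have hpartial : (fun n : ℕ => ∑ k ∈ Finset.Icc 1 n, ‖(Ioi N).indicator (1 : ℕ → ℂ) k‖) =O[atTop]
      fun n => (n : ℝ) ^ (1 : ℝ) := by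
    refine IsBigO.of_bound' (Eventually.of_forall fun n => ?_)
    rw [Real.rpow_one, Real.norm_of_nonneg (Finset.sum_nonneg fun _ _ => norm_nonneg _),
      Real.norm_natCast]
    calc _ ≤ ∑ _ ∈ Finset.Icc 1 n, (1 : ℝ) :=
          Finset.sum_le_sum fun k _ => (norm_indicator_le_norm_self _ _).trans (by simp)
      _ = n := by simp
  have hLSeries := LSeries_eq_mul_integral' _ zero_le_one hs hpartial
  simp only [sum_Icc_indicator_Ioi] at hLSeries
  rw [LSeries_indicator_Ioi hs, setIntegral_eq_of_subset_of_forall_sdiff_eq_zero measurableSet_Ioi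
    (Ioi_subset_Ioi (Nat.one_le_cast.2 hN)) fun x hx => ?_,
    setIntegral_floor_sub_mul_cpow hN hs] at hLSeries
  · rw [zetaApprox, ← sub_sub, hLSeries]
    field_simp
    ring
  · rw [Nat.sub_eq_zero_of_le (Nat.floor_le_of_le (not_lt.1 hx.2)), Nat.cast_zero, zero_mul]

lemma zetaTail_eq_mellin (N : ℕ) (s : ℂ) :
    zetaTail N s =
      mellin ((Ioi (N : ℝ)).indicator fun x => ((Int.fract x : ℝ) : ℂ)) (-s) := by
  rw [mellin, setIntegral_eq_of_subset_of_forall_sdiff_eq_zero measurableSet_Ioi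
    (Ioi_subset_Ioi N.cast_nonneg) fun x hx => by rw [indicator_of_notMem hx.2, smul_zero],
    zetaTail]
  refine setIntegral_congr_fun measurableSet_Ioi fun x hx => ?_
  simp only [indicator_of_mem hx, smul_eq_mul]
  rw [mul_comm, neg_add']

lemma differentiableAt_zetaTail (hN : 0 < N) (hs : 0 < s.re) :
    DifferentiableAt ℂ (zetaTail N) s := by
  set f : ℝ → ℂ := (Ioi (N : ℝ)).indicator fun x => ((Int.fract x : ℝ) : ℂ)
  have hf_bound (x : ℝ) : ‖f x‖ ≤ 1 := by
    refine (norm_indicator_le_norm_self _ _).trans ?_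
    rw [norm_real, Real.norm_of_nonneg (Int.fract_nonneg x)]
    exact (Int.fract_lt_one x).le
  have hf_loc : LocallyIntegrable f :=
    (locallyIntegrable_const (1 : ℝ)).mono
      ((measurable_ofReal.comp measurable_fract).indicator measurableSet_Ioi).aestronglyMeasurable
      (ae_of_all _ fun x => by simpa using hf_bound x)
  have hf_zero : f =ᶠ[𝓝[>] 0] fun _ => 0 := by
    filter_upwards [mem_nhdsWithin_of_mem_nhds (Iio_mem_nhds (Nat.cast_pos.2 hN))] with x hx
    exact indicator_of_notMem (not_lt.2 (mem_Iio.1 hx).le) _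
  rw [funext (zetaTail_eq_mellin N)]
  refine (mellin_differentiableAt_of_isBigO_rpow (a := 0) (b := (-s).re - 1)
    (hf_loc.locallyIntegrableOn _) (IsBigO.of_bound 1 (Eventually.of_forall fun x => ?_))
    (by simpa using hs) (hf_zero.trans_isBigO (isBigO_zero _ _)) (by linarith)).comp s
    differentiableAt_id.neg
  simpa using hf_bound x

lemma zeta_sub_zetaApprox (hN : 0 < N) (hs : 0 < s.re) (hs_ne : s ≠ 1) :
    riemannZeta s - zetaApprox N s = -s * zetaTail N s := by
  have hU : IsOpen {z : ℂ | 0 < z.re} := isOpen_lt continuous_const continuous_re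
  have hdirichlet : Differentiable ℂ fun z : ℂ => ∑ n ∈ Finset.Icc 1 N, (n : ℂ) ^ (-z) := by
    refine Differentiable.fun_sum fun n hn => differentiable_neg.const_cpow (Or.inl ?_)
    exact Nat.cast_ne_zero.2 (Nat.one_le_iff_ne_zero.1 (Finset.mem_Icc.1 hn).1)
  have hpow : Differentiable ℂ fun z : ℂ => (N : ℂ) ^ (1 - z) :=
    (differentiable_id.const_sub 1).const_cpow (Or.inl (Nat.cast_ne_zero.2 hN.ne'))
  have hright : DifferentiableOn ℂ (fun z => (z - 1) *
      (∑ n ∈ Finset.Icc 1 N, (n : ℂ) ^ (-z) - z * zetaTail N z) + (N : ℂ) ^ (1 - z))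
      {z : ℂ | 0 < z.re} := fun z hz => by
    have := differentiableAt_zetaTail hN hz
    exact ((((by fun_prop : DifferentiableAt ℂ (fun z => z - 1) z).mul
      ((hdirichlet z).sub (differentiableAt_id.mul this))).add (hpow z))).differentiableWithinAt
  have hlocal : riemannZeta₁ =ᶠ[𝓝 2] fun z => (z - 1) *
      (∑ n ∈ Finset.Icc 1 N, (n : ℂ) ^ (-z) - z * zetaTail N z) + (N : ℂ) ^ (1 - z) := by
    filter_upwards [(isOpen_lt continuous_const continuous_re).mem_nhds
      (show (1 : ℝ) < (2 : ℂ).re by simp)] with z (hz : 1 < z.re)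
    have hz_ne : z ≠ 1 := ne_of_apply_ne re (by simpa using hz.ne')
    have hz_sub := sub_ne_zero.2 hz_ne
    have heq := zeta_sub_zetaApprox_of_one_lt_re hN hz
    rw [riemannZeta_eq_inv_sub_mul hz_ne, zetaApprox] at heq
    field_simp at heq
    linear_combination heq
  have heq := (differentiable_riemannZeta₁.differentiableOn.analyticOnNhd hU)
    |>.eqOn_of_preconnected_of_eventuallyEq (hright.analyticOnNhd hU)
      (convex_halfSpace_re_gt 0).isPreconnected (z₀ := 2) (by simp) hlocal hs
  have hs_sub := sub_ne_zero.2 hs_ne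
  rw [riemannZeta_eq_inv_sub_mul hs_ne, zetaApprox, heq]
  field_simp
  ring

lemma differentiableAt_zetaApprox (hN : 0 < N) (hs : s ≠ 1) :
    DifferentiableAt ℂ (zetaApprox N) s := by
  have hpow {n : ℕ} (hn : 0 < n) {g : ℂ → ℂ} (hg : DifferentiableAt ℂ g s) :
      DifferentiableAt ℂ (fun z => (n : ℂ) ^ g z) s :=
    hg.const_cpow (Or.inl (Nat.cast_ne_zero.2 hn.ne'))
  refine .add (.fun_sum fun n hn => hpow (Finset.mem_Icc.1 hn).1 differentiableAt_id.neg) ?_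
  exact (hpow hN (differentiableAt_id.const_sub 1)).div (differentiableAt_id.sub_const 1)
    (sub_ne_zero.2 hs)

lemma norm_zeta_sub_zetaApprox_le (hN : 0 < N) (hs : 0 < s.re) (hs_ne : s ≠ 1) :
    ‖riemannZeta s - zetaApprox N s‖ ≤ ‖s‖ / s.re := by
  have hN_pos : (0 : ℝ) < N := Nat.cast_pos.2 hN
  rw [zeta_sub_zetaApprox hN hs hs_ne, norm_mul, norm_neg, div_eq_mul_inv, zetaTail]
  refine mul_le_mul_of_nonneg_left ?_ (norm_nonneg _)
  calc ‖∫ x in Ioi (N : ℝ), ((Int.fract x : ℝ) : ℂ) * (x : ℂ) ^ (-(s + 1))‖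
      ≤ ∫ x in Ioi (N : ℝ), x ^ (-(s.re + 1)) := by
        refine norm_integral_le_of_norm_le (integrableOn_Ioi_rpow_of_lt (by linarith) hN_pos) ?_
        filter_upwards [ae_restrict_mem measurableSet_Ioi] with x hx
        have hx_pos : 0 < x := hN_pos.trans hx
        rw [norm_mul, norm_real, Real.norm_of_nonneg (Int.fract_nonneg x),
          norm_cpow_eq_rpow_re_of_pos hx_pos, neg_re, add_re, one_re]
        exact mul_le_of_le_one_left (by positivity) (Int.fract_lt_one x).le
    _ = (N : ℝ) ^ (-s.re) * s.re⁻¹ := by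
        rw [integral_Ioi_rpow_of_lt (by linarith) hN_pos, show -(s.re + 1) + 1 = -s.re by ring,
          neg_div_neg_eq, div_eq_mul_inv]
    _ ≤ s.re⁻¹ := mul_le_of_le_one_left (by positivity)
        (Real.rpow_le_one_of_one_le_of_nonpos (Nat.one_le_cast.2 hN) (by linarith))

lemma norm_zeta_le (hs : 0 < s.re) (hs_ne : s ≠ 1) :
    ‖riemannZeta s‖ ≤ 1 + 1 / ‖s - 1‖ + ‖s‖ / s.re := by
  have hone : zetaApprox 1 s = 1 + 1 / (s - 1) := by simp [zetaApprox]
  calc ‖riemannZeta s‖ = ‖1 + 1 / (s - 1) + (riemannZeta s - zetaApprox 1 s)‖ := by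
        rw [hone, add_sub_cancel]
    _ ≤ ‖(1 : ℂ)‖ + ‖1 / (s - 1)‖ + ‖riemannZeta s - zetaApprox 1 s‖ := norm_add₃_le
    _ ≤ _ := by
        rw [norm_one, norm_div, norm_one]
        gcongr
        exact norm_zeta_sub_zetaApprox_le one_pos hs hs_ne

lemma norm_zeta_le_add_im_div (hs : 0 < s.re) (hs_im : 1 ≤ s.im) :
    ‖riemannZeta s‖ ≤ 3 + s.im / s.re := by
  have hs_ne : s ≠ 1 := ne_of_apply_ne im (by rw [one_im]; positivity)
  have hsub : 1 ≤ ‖s - 1‖ :=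
    calc (1 : ℝ) ≤ (s - 1).im := by rwa [sub_im, one_im, sub_zero]
      _ ≤ ‖s - 1‖ := im_le_norm _
  have hnorm : ‖s‖ / s.re ≤ 1 + s.im / s.re := by
    rw [one_add_div hs.ne']
    gcongr
    simpa only [abs_of_pos hs, abs_of_pos (one_pos.trans_le hs_im)] using
      norm_le_abs_re_add_abs_im s
  linarith [norm_zeta_le hs hs_ne, (div_le_one (one_pos.trans_le hsub)).2 hsub]

lemma norm_zetaApprox_le (hN : 0 < N) (hs : 0 ≤ s.re) :
    ‖zetaApprox N s‖ ≤ N + N / ‖s - 1‖ := by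
  have hterm {n : ℕ} (hn : 0 < n) : ‖(n : ℂ) ^ (-s)‖ ≤ 1 := by
    rw [norm_natCast_cpow_of_pos hn, neg_re]
    exact Real.rpow_le_one_of_one_le_of_nonpos (Nat.one_le_cast.2 hn) (neg_nonpos.2 hs)
  have hsum : ‖∑ n ∈ Finset.Icc 1 N, (n : ℂ) ^ (-s)‖ ≤ N := by
    simpa using norm_sum_le_of_le (f := fun n : ℕ => (n : ℂ) ^ (-s)) _
      fun n hn => hterm (Finset.mem_Icc.1 hn).1
  have hpow : ‖(N : ℂ) ^ (1 - s)‖ ≤ N := by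
    rw [sub_eq_add_neg, cpow_add _ _ (Nat.cast_ne_zero.2 hN.ne'), cpow_one, norm_mul,
      Complex.norm_natCast]
    exact mul_le_of_le_one_right N.cast_nonneg (hterm hN)
  rw [zetaApprox]
  refine (norm_add_le _ _).trans ?_
  rw [norm_div]
  gcongr

end ZetaApproximation

section MeanSquare

variable {f g h : ℝ → ℂ} {a b c C : ℝ}

lemma intervalIntegrable_norm_sq (hab : a ≤ b) (hf : ContinuousOn f (Ici a)) :
    IntervalIntegrable (fun t => ‖f t‖ ^ 2) volume a b :=
  ((hf.norm.pow 2).mono (uIcc_of_le hab ▸ Icc_subset_Ici_self)).intervalIntegrable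

lemma integral_norm_sq_nonneg (hab : a ≤ b) (f : ℝ → ℂ) : 0 ≤ ∫ t in a..b, ‖f t‖ ^ 2 :=
  intervalIntegral.integral_nonneg hab fun _ _ => sq_nonneg _

lemma integral_norm_add_sq_le (hab : a ≤ b) (hf : ContinuousOn f (Ici a))
    (hg : ContinuousOn g (Ici a)) :
    ∫ t in a..b, ‖f t + g t‖ ^ 2 ≤ 2 * (∫ t in a..b, ‖f t‖ ^ 2) + 2 * ∫ t in a..b, ‖g t‖ ^ 2 := by
  have hf_int := (intervalIntegrable_norm_sq hab hf).const_mul 2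
  have hg_int := (intervalIntegrable_norm_sq hab hg).const_mul 2
  rw [← intervalIntegral.integral_const_mul, ← intervalIntegral.integral_const_mul,
    ← intervalIntegral.integral_add hf_int hg_int]
  refine intervalIntegral.integral_mono_on hab (intervalIntegrable_norm_sq hab (hf.add hg))
    (hf_int.add hg_int) fun t _ => ?_
  calc ‖f t + g t‖ ^ 2 ≤ (‖f t‖ + ‖g t‖) ^ 2 := by gcongr; exact norm_add_le _ _
    _ ≤ 2 * (‖f t‖ ^ 2 + ‖g t‖ ^ 2) := add_sq_le
    _ = _ := mul_add _ _ _

lemma integral_norm_sub_sq_le (hab : a ≤ b) (hf : ContinuousOn f (Ici a))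
    (hg : ContinuousOn g (Ici a)) :
    ∫ t in a..b, ‖f t - g t‖ ^ 2 ≤ 2 * (∫ t in a..b, ‖f t‖ ^ 2) + 2 * ∫ t in a..b, ‖g t‖ ^ 2 := by
  simpa only [sub_eq_add_neg, Pi.neg_apply, norm_neg] using integral_norm_add_sq_le hab hf hg.neg

lemma isBigO_integral_norm_add_sq (hf : ContinuousOn f (Ici a)) (hg : ContinuousOn g (Ici a)) :
    (fun T => ∫ t in a..T, ‖f t + g t‖ ^ 2) =O[atTop]
      fun T => (∫ t in a..T, ‖f t‖ ^ 2) + ∫ t in a..T, ‖g t‖ ^ 2 := by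
  refine IsBigO.of_bound 2 ((eventually_ge_atTop a).mono fun T hT => ?_)
  rw [Real.norm_of_nonneg (integral_norm_sq_nonneg hT _), Real.norm_of_nonneg (add_nonneg
    (integral_norm_sq_nonneg hT f) (integral_norm_sq_nonneg hT g)), mul_add]
  exact integral_norm_add_sq_le hT hf hg

lemma isTheta_integral_norm_add_sq {φ : ℝ → ℝ} (hf : ContinuousOn f (Ici a))
    (hg : ContinuousOn g (Ici a)) (hfφ : (fun T => ∫ t in a..T, ‖f t‖ ^ 2) =Θ[atTop] φ)
    (hgφ : (fun T => ∫ t in a..T, ‖g t‖ ^ 2) =o[atTop] φ) :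
    (fun T => ∫ t in a..T, ‖f t + g t‖ ^ 2) =Θ[atTop] φ := by
  refine ⟨(isBigO_integral_norm_add_sq hf hg).trans (hfφ.1.add hgφ.isBigO), ?_⟩
  have hsplit : φ =O[atTop]
      fun T => (∫ t in a..T, ‖f t + g t‖ ^ 2) + ∫ t in a..T, ‖g t‖ ^ 2 := by
    refine hfφ.2.trans ?_
    simpa only [Pi.add_apply, Pi.neg_apply, add_neg_cancel_right, norm_neg] using
      isBigO_integral_norm_add_sq (hf.add hg) hg.neg
  simpa only [add_sub_cancel_right] using
    hsplit.trans ((hgφ.trans_isBigO hsplit).right_isBigO_sub)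

lemma isBigO_integral_norm_sq_id (hf : ∀ t ∈ Ici a, ‖f t‖ ≤ C) :
    (fun T => ∫ t in a..T, ‖f t‖ ^ 2) =O[atTop] fun T : ℝ => T := by
  have hbound : (fun T => ∫ t in a..T, ‖f t‖ ^ 2) =O[atTop] fun T => T - a := by
    refine IsBigO.of_bound (C ^ 2) ((eventually_ge_atTop a).mono fun T hT => ?_)
    refine intervalIntegral.norm_integral_le_of_norm_le_const fun t ht => ?_
    rw [norm_pow, norm_norm]
    exact pow_le_pow_left₀ (norm_nonneg _) (hf t (uIoc_of_le hT ▸ ht).1.le) 2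
  exact hbound.trans ((isBigO_refl _ _).sub (isLittleO_const_id_atTop a).isBigO)

lemma isTheta_integral_norm_mul_sq (hc : 0 < c) (hhc : ∀ t ∈ Ici a, c ≤ ‖h t‖)
    (hhC : ∀ t ∈ Ici a, ‖h t‖ ≤ C) (hh : ContinuousOn h (Ici a)) (hf : ContinuousOn f (Ici a)) :
    (fun T => ∫ t in a..T, ‖h t * f t‖ ^ 2) =Θ[atTop] fun T => ∫ t in a..T, ‖f t‖ ^ 2 := by
  constructor
  · refine IsBigO.of_bound (C ^ 2) ((eventually_ge_atTop a).mono fun T hT => ?_)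
    rw [Real.norm_of_nonneg (integral_norm_sq_nonneg hT _),
      Real.norm_of_nonneg (integral_norm_sq_nonneg hT _), ← intervalIntegral.integral_const_mul]
    refine intervalIntegral.integral_mono_on hT (intervalIntegrable_norm_sq hT (hh.mul hf))
      ((intervalIntegrable_norm_sq hT hf).const_mul _) fun t ht => ?_
    rw [norm_mul, mul_pow]
    gcongr
    exact hhC t ht.1
  · refine IsBigO.of_bound (c ^ 2)⁻¹ ((eventually_ge_atTop a).mono fun T hT => ?_)
    rw [Real.norm_of_nonneg (integral_norm_sq_nonneg hT _),
      Real.norm_of_nonneg (integral_norm_sq_nonneg hT _), le_inv_mul_iff₀ (by positivity),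
      ← intervalIntegral.integral_const_mul]
    refine intervalIntegral.integral_mono_on hT ((intervalIntegrable_norm_sq hT hf).const_mul _)
      (intervalIntegrable_norm_sq hT (hh.mul hf)) fun t ht => ?_
    rw [norm_mul, mul_pow]
    gcongr
    exact hhc t ht.1

end MeanSquare

section WeightedSeries

variable {w : ℕ → ℝ}

lemma sq_tsum_mul_le (hw : ∀ m, 0 ≤ w m) (hw_sum : Summable w) {x : ℕ → ℝ} (hx : ∀ m, 0 ≤ x m)
    (hwx : Summable fun m => w m * x m ^ 2) :
    (∑' m, w m * x m) ^ 2 ≤ (∑' m, w m) * ∑' m, w m * x m ^ 2 := by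
  have hsq_nonneg (m : ℕ) : 0 ≤ w m * x m ^ 2 := mul_nonneg (hw m) (sq_nonneg _)
  have hprod_nonneg : 0 ≤ (∑' m, w m) * ∑' m, w m * x m ^ 2 :=
    mul_nonneg (tsum_nonneg hw) (tsum_nonneg hsq_nonneg)
  rw [← Real.sq_sqrt hprod_nonneg]
  refine pow_le_pow_left₀ (tsum_nonneg fun m => mul_nonneg (hw m) (hx m))
    (Real.tsum_le_of_sum_le (fun m => mul_nonneg (hw m) (hx m))
      fun s => Real.le_sqrt_of_sq_le ?_) 2
  calc (∑ m ∈ s, w m * x m) ^ 2 ≤ (∑ m ∈ s, w m) * ∑ m ∈ s, w m * x m ^ 2 :=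
        Finset.sum_sq_le_sum_mul_sum_of_sq_le_mul s (fun m _ => hw m) (fun m _ => hsq_nonneg m)
          fun m _ => le_of_eq (by ring)
    _ ≤ _ := by
        gcongr
        exacts [Finset.sum_nonneg fun m _ => hsq_nonneg m, tsum_nonneg hw,
          hw_sum.sum_le_tsum s fun m _ => hw m, hwx.sum_le_tsum s fun m _ => hsq_nonneg m]

lemma norm_tsum_mul_sq_le {K : ℝ} (hw : Summable w) {c z : ℕ → ℂ} (hc : ∀ m, ‖c m‖ ≤ w m)
    (hz : ∀ m, ‖z m‖ ≤ K) :
    ‖∑' m, c m * z m‖ ^ 2 ≤ (∑' m, w m) * ∑' m, w m * ‖z m‖ ^ 2 := by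
  have hw_nonneg (m : ℕ) : 0 ≤ w m := (norm_nonneg _).trans (hc m)
  have hsummable (k : ℕ) : Summable fun m => w m * ‖z m‖ ^ k := by
    refine (hw.mul_right (K ^ k)).of_nonneg_of_le
      (fun m => mul_nonneg (hw_nonneg m) (by positivity)) fun m => ?_
    gcongr
    exacts [hw_nonneg m, hz m]
  calc ‖∑' m, c m * z m‖ ^ 2 ≤ (∑' m, w m * ‖z m‖) ^ 2 := by
        gcongr
        refine tsum_of_norm_bounded (by simpa using (hsummable 1).hasSum) fun m => ?_
        rw [norm_mul]
        gcongr
        exact hc m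
    _ ≤ _ := sq_tsum_mul_le hw_nonneg hw (fun m => norm_nonneg (z m)) (hsummable 2)

lemma continuousOn_tsum_mul {a : ℝ} (hw : Summable w) {c f : ℕ → ℝ → ℂ}
    (hc : ∀ m t, ‖c m t‖ ≤ w m) (hc_cont : ∀ m, Continuous (c m))
    (hf : ∀ m, ContinuousOn (f m) (Ici a))
    (hfK : ∀ b, ∃ K, ∀ m, ∀ t ∈ Icc a b, ‖f m t‖ ≤ K) :
    ContinuousOn (fun t => ∑' m, c m t * f m t) (Ici a) := fun t ht => by
  obtain ⟨K, hK⟩ := hfK (t + 1)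
  have hIcc : ContinuousOn (fun t => ∑' m, c m t * f m t) (Icc a (t + 1)) :=
    continuousOn_tsum
      (fun m => (hc_cont m).continuousOn.mul ((hf m).mono Icc_subset_Ici_self))
      (hw.mul_right K) fun m u hu => by
        rw [norm_mul]
        exact mul_le_mul (hc m u) (hK m u hu) (norm_nonneg _) ((norm_nonneg _).trans (hc m u))
  exact (hIcc t ⟨ht, (lt_add_one t).le⟩).mono_of_mem_nhdsWithin
    (inter_mem_nhdsWithin _ (Iic_mem_nhds (lt_add_one t)))

lemma integral_norm_tsum_mul_sq_le {a b K : ℝ} (hab : a ≤ b) (hw : Summable w)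
    {c f : ℕ → ℝ → ℂ} (hc : ∀ m t, ‖c m t‖ ≤ w m) (hf : ∀ m, ContinuousOn (f m) (Ici a))
    (hfK : ∀ m, ∀ t ∈ Icc a b, ‖f m t‖ ≤ K) :
    ∫ t in a..b, ‖∑' m, c m t * f m t‖ ^ 2 ≤
      (∑' m, w m) * ∑' m, w m * ∫ t in a..b, ‖f m t‖ ^ 2 := by
  have hbound : ∀ m, ∀ t ∈ Icc a b, ‖w m * ‖f m t‖ ^ 2‖ ≤ w m * K ^ 2 := fun m t ht => by
    have hw_nonneg : 0 ≤ w m := (norm_nonneg _).trans (hc m a)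
    rw [norm_mul, Real.norm_of_nonneg hw_nonneg, norm_pow, norm_norm]
    gcongr
    exact hfK m t ht
  have hsum := hw.mul_right (K ^ 2)
  have hsub : uIoc a b ⊆ Icc a b := uIoc_of_le hab ▸ Ioc_subset_Icc_self
  have hintegrable : IntervalIntegrable (fun t => ∑' m, w m * ‖f m t‖ ^ 2) volume a b := by
    refine ContinuousOn.intervalIntegrable (uIcc_of_le hab ▸ continuousOn_tsum (fun m => ?_)
      hsum hbound)
    exact (((hf m).mono Icc_subset_Ici_self).norm.pow 2).const_mul (w m)
  have hintegral := intervalIntegral.hasSum_integral_of_dominated_convergence (μ := volume)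
    (a := a) (b := b) (F := fun m t => w m * ‖f m t‖ ^ 2) (fun m _ => w m * K ^ 2)
    (fun m => ((intervalIntegrable_norm_sq hab (hf m)).const_mul (w m)).def'.aestronglyMeasurable)
    (fun m => ae_of_all _ fun t ht => hbound m t (hsub ht))
    (ae_of_all _ fun t _ => hsum) intervalIntegrable_const
    (ae_of_all _ fun t ht => (hsum.of_norm_bounded fun m => hbound m t (hsub ht)).hasSum)
  simp only [intervalIntegral.integral_const_mul] at hintegral
  rw [hintegral.tsum_eq, ← intervalIntegral.integral_const_mul,
    intervalIntegral.integral_of_le hab, intervalIntegral.integral_of_le hab]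
  refine integral_mono_of_nonneg (ae_of_all _ fun t => sq_nonneg _)
    ((hintegrable.const_mul _).1) ?_
  filter_upwards [ae_restrict_mem measurableSet_Ioc] with t ht
  exact norm_tsum_mul_sq_le hw (hc · t) fun m => hfK m t (Ioc_subset_Icc_self ht)

lemma isLittleO_tsum_mul (hw : Summable w) {M : ℕ → ℝ → ℝ} {φ : ℝ → ℝ} {C : ℝ}
    (hC : 0 ≤ C) (hMφ : ∀ m, M m =o[atTop] φ) (hM : ∀ᶠ T in atTop, ∀ m, ‖M m T‖ ≤ C * ‖φ T‖) :
    (fun T => ∑' m, w m * M m T) =o[atTop] φ := by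
  have hzero : ∀ᶠ T in atTop, φ T = 0 → ∑' m, w m * M m T = 0 := hM.mono fun T hT hφ => by
    have hM_zero (m : ℕ) : M m T = 0 := by simpa [hφ] using hT m
    simp only [hM_zero, mul_zero, tsum_zero]
  refine (isLittleO_iff_tendsto' hzero).2 ?_
  simp only [← tsum_div_const, mul_div_assoc]
  rw [← tsum_zero (β := ℕ)]
  refine tendsto_tsum_of_dominated_convergence (bound := fun m => ‖w m‖ * C)
    (hw.norm.mul_right C) (fun m => ?_) (hM.mono fun T hT m => ?_)
  · simpa only [mul_zero] using (hMφ m).tendsto_div_nhds_zero.const_mul (w m)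
  · rw [norm_mul, norm_div]
    gcongr
    exact div_le_of_le_mul₀ (norm_nonneg _) hC (hT m)

end WeightedSeries

section CriticalLine

variable {N : ℕ} {T : ℝ}

/-- The point `1/2 + it` of the critical line. -/
noncomputable def criticalLine (t : ℝ) : ℂ := 1 / 2 + t * I

@[simp] lemma criticalLine_re (t : ℝ) : (criticalLine t).re = 1 / 2 := by simp [criticalLine]

@[simp] lemma criticalLine_im (t : ℝ) : (criticalLine t).im = t := by simp [criticalLine]

lemma criticalLine_re_pos (t : ℝ) : 0 < (criticalLine t).re := by simp

lemma criticalLine_ne_one (t : ℝ) : criticalLine t ≠ 1 :=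
  ne_of_apply_ne re (by simp)

lemma norm_criticalLine_sq (t : ℝ) : ‖criticalLine t‖ ^ 2 = 1 / 4 + t ^ 2 := by
  rw [← normSq_eq_norm_sq, normSq_apply, criticalLine_re, criticalLine_im]
  ring

lemma norm_criticalLine_sub_one_sq (t : ℝ) : ‖criticalLine t - 1‖ ^ 2 = 1 / 4 + t ^ 2 := by
  rw [← normSq_eq_norm_sq, normSq_apply, sub_re, sub_im, criticalLine_re, criticalLine_im, one_re,
    one_im]
  ring

lemma continuous_criticalLine : Continuous criticalLine := by
  unfold criticalLine
  fun_prop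

lemma continuous_comp_criticalLine {f : ℂ → ℂ}
    (hf : ∀ s : ℂ, 0 < s.re → s ≠ 1 → DifferentiableAt ℂ f s) :
    Continuous fun t => f (criticalLine t) :=
  continuous_iff_continuousAt.2 fun t =>
    (hf _ (criticalLine_re_pos t) (criticalLine_ne_one t)).continuousAt.comp
      continuous_criticalLine.continuousAt

lemma continuous_zeta_criticalLine : Continuous fun t => riemannZeta (criticalLine t) :=
  continuous_comp_criticalLine fun _ _ hs => differentiableAt_riemannZeta hs

lemma continuous_zetaApprox_criticalLine (hN : 0 < N) :
    Continuous fun t => zetaApprox N (criticalLine t) :=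
  continuous_comp_criticalLine fun _ _ hs => differentiableAt_zetaApprox hN hs

lemma continuous_sum_cpow_neg_criticalLine (N : ℕ) :
    Continuous fun t => ∑ n ∈ Finset.Icc 1 N, (n : ℂ) ^ (-criticalLine t) :=
  continuous_finsetSum _ fun n hn => by
    have hn_ne : NeZero n := ⟨Nat.ne_of_gt (Finset.mem_Icc.1 hn).1⟩
    exact continuous_criticalLine.neg.const_cpow (Or.inl (NeZero.ne _))

lemma continuous_cpow_div_criticalLine (hN : 0 < N) :
    Continuous fun t => (N : ℂ) ^ (1 - criticalLine t) / (criticalLine t - 1) :=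
  ((continuous_const.sub continuous_criticalLine).const_cpow
    (Or.inl (Nat.cast_ne_zero.2 hN.ne'))).div (continuous_criticalLine.sub continuous_const)
    fun t => sub_ne_zero.2 (criticalLine_ne_one t)

lemma ofReal_cpow_neg_add_mul_I {x : ℝ} (hx : 0 < x) (σ t : ℝ) :
    (x : ℂ) ^ (-(σ + t * I)) = ((x ^ (-σ) : ℝ) : ℂ) * cexp (-(t * Real.log x : ℝ) * I) := by
  have hx_ne : (x : ℂ) ≠ 0 := ofReal_ne_zero.2 hx.ne'
  rw [neg_add, cpow_add _ _ hx_ne, ← ofReal_neg, ← ofReal_cpow hx.le, cpow_def_of_ne_zero hx_ne,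
    ← ofReal_log hx.le]
  push_cast
  ring_nf

lemma sum_cpow_neg_criticalLine (N : ℕ) (t : ℝ) :
    ∑ n ∈ Finset.Icc 1 N, (n : ℂ) ^ (-criticalLine t) = ∑ n ∈ Finset.Icc 1 N,
      (((n : ℝ) ^ (-(1 / 2) : ℝ) : ℝ) : ℂ) * cexp (-(t * Real.log n : ℝ) * I) := by
  refine Finset.sum_congr rfl fun n hn => ?_
  have hn_pos : (0 : ℝ) < n := Nat.cast_pos.2 (Finset.mem_Icc.1 hn).1
  rw [← ofReal_cpow_neg_add_mul_I hn_pos, criticalLine]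
  push_cast
  rfl

lemma zetaTail_criticalLine (hN : 0 < N) (t : ℝ) :
    zetaTail N (criticalLine t) = oscIntegral (volume.restrict (Ioi (N : ℝ)))
      (fun x => Int.fract x * x ^ (-(3 / 2) : ℝ)) Real.log t := by
  refine setIntegral_congr_fun measurableSet_Ioi fun x hx => ?_
  have hx_pos : 0 < x := (Nat.cast_pos.2 hN).trans hx
  have hexp : criticalLine t + 1 = ((3 / 2 : ℝ) : ℂ) + t * I := by
    rw [criticalLine]
    push_cast
    ring
  simp only [hexp, ofReal_cpow_neg_add_mul_I hx_pos, ofReal_mul, mul_assoc]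

lemma abs_fract_mul_rpow_le {x : ℝ} (hx : 0 < x) (r : ℝ) :
    |Int.fract x * x ^ r| ≤ x ^ r := by
  rw [abs_of_nonneg (mul_nonneg (Int.fract_nonneg x) (by positivity))]
  exact mul_le_of_le_one_left (by positivity) (Int.fract_lt_one x).le

lemma norm_mul_sq_fract_mul_rpow_le {x : ℝ} (hx : 0 < x) :
    ‖x * (Int.fract x * x ^ (-(3 / 2) : ℝ)) ^ 2‖ ≤ x ^ (-2 : ℝ) := by
  rw [norm_mul, Real.norm_of_nonneg hx.le, norm_pow, Real.norm_eq_abs]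
  calc _ ≤ x * (x ^ (-(3 / 2) : ℝ)) ^ 2 := by gcongr; exact abs_fract_mul_rpow_le hx _
    _ = x ^ (1 + -(3 / 2) * (2 : ℕ) : ℝ) := by
      rw [Real.rpow_add hx, Real.rpow_one, Real.rpow_mul_natCast hx.le]
    _ = _ := by norm_num

lemma integral_norm_zetaTail_sq_le (hN : 0 < N) (hT : 0 < T) :
    ∫ t in (0 : ℝ)..T, ‖zetaTail N (criticalLine t)‖ ^ 2 ≤ 4 * π / N := by
  have hN_pos : (0 : ℝ) < N := Nat.cast_pos.2 hN
  have hmeas : Measurable fun x : ℝ => Int.fract x * x ^ (-(3 / 2) : ℝ) :=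
    measurable_fract.mul (by fun_prop)
  have hG : IntegrableOn (fun x : ℝ => Int.fract x * x ^ (-(3 / 2) : ℝ)) (Ioi (N : ℝ)) :=
    (integrableOn_Ioi_rpow_of_lt (by norm_num) hN_pos).mono' hmeas.aestronglyMeasurable
      ((ae_restrict_mem measurableSet_Ioi).mono fun x hx =>
        abs_fract_mul_rpow_le (hN_pos.trans hx) _)
  have hbound : ∀ᵐ x ∂volume.restrict (Ioi (N : ℝ)),
      ‖x * (Int.fract x * x ^ (-(3 / 2) : ℝ)) ^ 2‖ ≤ x ^ (-2 : ℝ) :=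
    (ae_restrict_mem measurableSet_Ioi).mono fun x hx =>
      norm_mul_sq_fract_mul_rpow_le (hN_pos.trans hx)
  have hint : IntegrableOn (fun x : ℝ => x ^ (-2 : ℝ)) (Ioi (N : ℝ)) :=
    integrableOn_Ioi_rpow_of_lt (by norm_num) hN_pos
  simp only [zetaTail_criticalLine hN]
  calc _ ≤ 4 * π * ∫ x in Ioi (N : ℝ), x * (Int.fract x * x ^ (-(3 / 2) : ℝ)) ^ 2 :=
        integral_norm_sq_oscIntegral_Ioi_log_le hN_pos hG (hint.mono' (by fun_prop) hbound) hT
    _ ≤ 4 * π * ∫ x in Ioi (N : ℝ), x ^ (-2 : ℝ) := by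
        refine mul_le_mul_of_nonneg_left ?_ (by positivity)
        exact (le_norm_self _).trans (norm_integral_le_of_norm_le hint hbound)
    _ = 4 * π / N := by
        rw [integral_Ioi_rpow_of_lt (by norm_num) hN_pos]
        norm_num [Real.rpow_neg_one]
        ring

lemma integral_norm_zeta_sub_zetaApprox_sq_le (hT : 1 ≤ T) (hTN : T ≤ N) :
    ∫ t in (0 : ℝ)..T, ‖riemannZeta (criticalLine t) - zetaApprox N (criticalLine t)‖ ^ 2 ≤
      8 * π * T := by
  have hT_pos : 0 < T := zero_lt_one.trans_le hT
  have hN_pos : (0 : ℝ) < N := hT_pos.trans_le hTN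
  have hN : 0 < N := Nat.cast_pos.1 hN_pos
  have hzeta := (continuous_zeta_criticalLine.sub
    (continuous_zetaApprox_criticalLine hN)).continuousOn (s := Ici 0)
  have htail := (continuous_comp_criticalLine fun _ hs _ =>
    differentiableAt_zetaTail hN hs).continuousOn (s := Ici 0)
  calc _ ≤ ∫ t in (0 : ℝ)..T, 2 * T ^ 2 * ‖zetaTail N (criticalLine t)‖ ^ 2 := by
        refine intervalIntegral.integral_mono_on hT_pos.le (intervalIntegrable_norm_sq hT_pos.le
          hzeta) ((intervalIntegrable_norm_sq hT_pos.le htail).const_mul _) fun t ht => ?_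
        rw [zeta_sub_zetaApprox hN (criticalLine_re_pos t) (criticalLine_ne_one t), norm_mul,
          norm_neg, mul_pow, norm_criticalLine_sq]
        gcongr
        nlinarith [ht.1, ht.2]
    _ ≤ 2 * T ^ 2 * (4 * π / N) := by
        rw [intervalIntegral.integral_const_mul]
        gcongr
        exact integral_norm_zetaTail_sq_le hN hT_pos
    _ = 8 * π * T * (T / N) := by ring
    _ ≤ 8 * π * T := mul_le_of_le_one_right (by positivity) ((div_le_one hN_pos).2 hTN)

lemma norm_cpow_div_criticalLine_sq_le (hN : 0 < N) (t : ℝ) :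
    ‖(N : ℂ) ^ (1 - criticalLine t) / (criticalLine t - 1)‖ ^ 2 ≤ 4 * N * (1 + t ^ 2)⁻¹ := by
  have hpow : ‖(N : ℂ) ^ (1 - criticalLine t)‖ ^ 2 = N := by
    rw [norm_natCast_cpow_of_pos hN, sub_re, one_re, criticalLine_re,
      ← Real.rpow_mul_natCast (Nat.cast_nonneg N)]
    norm_num
  rw [norm_div, div_pow, hpow, norm_criticalLine_sub_one_sq, ← div_eq_mul_inv,
    div_le_div_iff₀ (by positivity) (by positivity)]
  nlinarith [mul_nonneg (Nat.cast_nonneg (α := ℝ) N) (sq_nonneg t)]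

lemma integral_norm_cpow_div_sq_le (hN : 0 < N) (hT : 0 ≤ T) :
    ∫ t in (0 : ℝ)..T, ‖(N : ℂ) ^ (1 - criticalLine t) / (criticalLine t - 1)‖ ^ 2 ≤
      2 * π * N := by
  have hint : IntervalIntegrable (fun t : ℝ => 4 * (N : ℝ) * (1 + t ^ 2)⁻¹) volume 0 T :=
    intervalIntegral.intervalIntegrable_inv_one_add_sq.const_mul _
  calc _ ≤ ∫ t in (0 : ℝ)..T, 4 * (N : ℝ) * (1 + t ^ 2)⁻¹ :=
        intervalIntegral.integral_mono_on hT
          (intervalIntegrable_norm_sq hT (continuous_cpow_div_criticalLine hN).continuousOn) hint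
          fun t _ => norm_cpow_div_criticalLine_sq_le hN t
    _ = 4 * N * Real.arctan T := by
        rw [intervalIntegral.integral_const_mul, integral_inv_one_add_sq, Real.arctan_zero,
          sub_zero]
    _ ≤ 4 * N * (π / 2) := by gcongr; exact (Real.arctan_lt_pi_div_two T).le
    _ = _ := by ring

lemma sum_Icc_rpow_neg_half_sq (N : ℕ) :
    ∑ n ∈ Finset.Icc 1 N, ((n : ℝ) ^ (-(1 / 2) : ℝ)) ^ 2 = harmonic N := by
  rw [harmonic_eq_sum_Icc]
  push_cast
  refine Finset.sum_congr rfl fun n _ => ?_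
  rw [← Real.rpow_mul_natCast n.cast_nonneg, ← Real.rpow_neg_one]
  norm_num

lemma one_add_log_two_mul_le (hT : 2 ≤ T) : 1 + Real.log (2 * T) ≤ 4 * Real.log T := by
  rw [Real.log_mul two_ne_zero (by positivity)]
  linarith [Real.log_two_gt_d9, Real.log_le_log two_pos hT]

lemma self_le_two_mul_mul_log (hT : 2 ≤ T) : T ≤ 2 * (T * Real.log T) := by
  nlinarith [Real.log_two_gt_d9, Real.log_le_log two_pos hT]

lemma integral_norm_sum_cpow_neg_sq_le (hT : 2 ≤ T) (hNT : N ≤ 2 * T) :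
    ∫ t in (0 : ℝ)..T, ‖∑ n ∈ Finset.Icc 1 N, (n : ℂ) ^ (-criticalLine t)‖ ^ 2 ≤
      32 * (∑' j : ℤ, (1 + (j : ℝ) ^ 2)⁻¹) * (T * Real.log T) := by
  have hT_pos : 0 < T := two_pos.trans_le hT
  have hharmonic : (harmonic N : ℝ) ≤ 4 * Real.log T := by
    rcases N.eq_zero_or_pos with rfl | hN
    · simpa using Real.log_nonneg (one_le_two.trans hT)
    · calc (harmonic N : ℝ) ≤ 1 + Real.log N := harmonic_le_one_add_log N
        _ ≤ 1 + Real.log (2 * T) := by gcongr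
        _ ≤ _ := one_add_log_two_mul_le hT
  calc _ ≤ ∫ t in (0 : ℝ)..(2 * T), ‖∑ n ∈ Finset.Icc 1 N, (n : ℂ) ^ (-criticalLine t)‖ ^ 2 :=
        intervalIntegral.integral_mono_interval le_rfl hT_pos.le (by linarith)
          (ae_of_all _ fun _ => sq_nonneg _) (intervalIntegrable_norm_sq (by positivity)
            (continuous_sum_cpow_neg_criticalLine N).continuousOn)
    _ ≤ 4 * (2 * T) * (∑' j : ℤ, (1 + (j : ℝ) ^ 2)⁻¹) * harmonic N := by
        simp only [sum_cpow_neg_criticalLine, ← sum_Icc_rpow_neg_half_sq]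
        exact integral_norm_sq_sum_le _ (by positivity) hNT
    _ ≤ 4 * (2 * T) * (∑' j : ℤ, (1 + (j : ℝ) ^ 2)⁻¹) * (4 * Real.log T) := by gcongr
    _ = _ := by ring

lemma half_mul_log_le_integral_norm_sum_cpow_neg_sq (hT : 0 < T) (hTN : T ≤ N) :
    T / 2 * Real.log T ≤
      ∫ t in (0 : ℝ)..T, ‖∑ n ∈ Finset.Icc 1 N, (n : ℂ) ^ (-criticalLine t)‖ ^ 2 := by
  calc T / 2 * Real.log T ≤ T / 2 * harmonic N := by
        gcongr
        refine le_trans (Real.log_le_log hT ?_) (log_add_one_le_harmonic N)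
        push_cast
        linarith
    _ ≤ _ := by
        simp only [sum_cpow_neg_criticalLine, ← sum_Icc_rpow_neg_half_sq]
        exact half_mul_sum_sq_le_integral_norm_sq _ _ (fun _ _ => by positivity) hT

lemma integral_norm_zeta_sub_sum_sq_le (hT : 1 ≤ T) (hTN : T ≤ N) (hNT : N ≤ 2 * T) :
    ∫ t in (0 : ℝ)..T, ‖riemannZeta (criticalLine t) -
      ∑ n ∈ Finset.Icc 1 N, (n : ℂ) ^ (-criticalLine t)‖ ^ 2 ≤ 24 * π * T := by
  have hT_nonneg : 0 ≤ T := zero_le_one.trans hT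
  have hN : 0 < N := Nat.cast_pos.1 ((zero_lt_one.trans_le hT).trans_le hTN)
  have hsplit (t : ℝ) : riemannZeta (criticalLine t) -
      ∑ n ∈ Finset.Icc 1 N, (n : ℂ) ^ (-criticalLine t) =
        (riemannZeta (criticalLine t) - zetaApprox N (criticalLine t)) +
          (N : ℂ) ^ (1 - criticalLine t) / (criticalLine t - 1) := by
    rw [zetaApprox]
    ring
  simp only [hsplit]
  calc _ ≤ 2 * (8 * π * T) + 2 * (2 * π * N) := by
        refine (integral_norm_add_sq_le hT_nonneg (continuous_zeta_criticalLine.sub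
          (continuous_zetaApprox_criticalLine hN)).continuousOn
          (continuous_cpow_div_criticalLine hN).continuousOn).trans ?_
        gcongr
        · exact integral_norm_zeta_sub_zetaApprox_sq_le hT hTN
        · exact integral_norm_cpow_div_sq_le hN hT_nonneg
    _ ≤ 2 * (8 * π * T) + 2 * (2 * π * (2 * T)) := by gcongr
    _ = _ := by ring

lemma exists_nat_between_two_mul (hT : 1 ≤ T) : ∃ N : ℕ, T ≤ N ∧ N ≤ 2 * T :=
  ⟨⌈T⌉₊, Nat.le_ceil T, by linarith [Nat.ceil_lt_add_one (zero_le_one.trans hT)]⟩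

lemma exists_integral_norm_zeta_sq_le : ∃ C, 0 ≤ C ∧ ∀ T : ℝ, 2 ≤ T →
    ∫ t in (0 : ℝ)..T, ‖riemannZeta (criticalLine t)‖ ^ 2 ≤ C * (T * Real.log T) := by
  set K : ℝ := ∑' j : ℤ, (1 + (j : ℝ) ^ 2)⁻¹
  refine ⟨2 * (32 * K) + 2 * (48 * π), by positivity, fun T hT => ?_⟩
  have hT_nonneg : 0 ≤ T := two_pos.le.trans hT
  obtain ⟨N, hTN, hNT⟩ := exists_nat_between_two_mul (one_le_two.trans hT)
  have hsum := (continuous_sum_cpow_neg_criticalLine N).continuousOn (s := Ici 0)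
  calc _ ≤ 2 * (32 * K * (T * Real.log T)) + 2 * (24 * π * T) := by
        have hadd := integral_norm_add_sq_le hT_nonneg hsum
          (continuous_zeta_criticalLine.continuousOn.sub hsum)
        simp only [Pi.sub_apply, add_sub_cancel] at hadd
        refine hadd.trans ?_
        gcongr
        · exact integral_norm_sum_cpow_neg_sq_le hT hNT
        · exact integral_norm_zeta_sub_sum_sq_le (one_le_two.trans hT) hTN hNT
    _ ≤ 2 * (32 * K * (T * Real.log T)) + 2 * (24 * π * (2 * (T * Real.log T))) := by
        gcongr
        exact self_le_two_mul_mul_log hT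
    _ = _ := by ring

lemma mul_log_le_integral_norm_zeta_sq (hT : 1 ≤ T) :
    T * Real.log T ≤
      4 * (∫ t in (0 : ℝ)..T, ‖riemannZeta (criticalLine t)‖ ^ 2) + 96 * π * T := by
  have hT_pos : 0 < T := zero_lt_one.trans_le hT
  obtain ⟨N, hTN, hNT⟩ := exists_nat_between_two_mul hT
  have hsum := (continuous_sum_cpow_neg_criticalLine N).continuousOn (s := Ici 0)
  have hzeta := continuous_zeta_criticalLine.continuousOn (s := Ici 0)
  have hsub := integral_norm_sub_sq_le hT_pos.le hzeta (hzeta.sub hsum)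
  simp only [Pi.sub_apply, sub_sub_cancel] at hsub
  linarith [half_mul_log_le_integral_norm_sum_cpow_neg_sq hT_pos hTN,
    integral_norm_zeta_sub_sum_sq_le hT hTN hNT]

lemma isLittleO_id_mul_log : (fun T : ℝ => T) =o[atTop] fun T => T * Real.log T := by
  simpa only [mul_one] using (isBigO_refl (fun T : ℝ => T) atTop).mul_isLittleO
    ((isLittleO_one_left_iff ℝ).2 (tendsto_norm_atTop_atTop.comp Real.tendsto_log_atTop))

lemma isTheta_integral_norm_zeta_sq_of_zero :
    (fun T => ∫ t in (0 : ℝ)..T, ‖riemannZeta (criticalLine t)‖ ^ 2) =Θ[atTop]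
      fun T => T * Real.log T := by
  constructor
  · obtain ⟨C, hC, hbound⟩ := exists_integral_norm_zeta_sq_le
    refine IsBigO.of_bound C ((eventually_ge_atTop 2).mono fun T hT => ?_)
    rw [Real.norm_of_nonneg (integral_norm_sq_nonneg (two_pos.le.trans hT) _)]
    exact (hbound T hT).trans (mul_le_mul_of_nonneg_left (le_norm_self _) hC)
  · have hle : (fun T => T * Real.log T) =O[atTop]
        fun T => (∫ t in (0 : ℝ)..T, ‖riemannZeta (criticalLine t)‖ ^ 2) + 24 * π * T := by
      refine IsBigO.of_bound 4 ((eventually_ge_atTop 1).mono fun T hT => ?_)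
      have hT_nonneg : 0 ≤ T := zero_le_one.trans hT
      rw [Real.norm_of_nonneg (mul_nonneg hT_nonneg (Real.log_nonneg hT))]
      refine le_trans ?_ (mul_le_mul_of_nonneg_left (le_norm_self _) zero_le_four)
      linarith [mul_log_le_integral_norm_zeta_sq hT]
    simpa only [add_sub_cancel_right] using hle.trans
      (((isLittleO_id_mul_log.const_mul_left (24 * π)).trans_isBigO hle).right_isBigO_sub)

theorem isTheta_integral_norm_zeta_sq (a : ℝ) :
    (fun T => ∫ t in a..T, ‖riemannZeta (criticalLine t)‖ ^ 2) =Θ[atTop]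
      fun T => T * Real.log T := by
  have hint (b c : ℝ) :
      IntervalIntegrable (fun t => ‖riemannZeta (criticalLine t)‖ ^ 2) volume b c :=
    (continuous_zeta_criticalLine.norm.pow 2).intervalIntegrable b c
  have hconst : (fun _ : ℝ => ∫ t in a..0, ‖riemannZeta (criticalLine t)‖ ^ 2) =o[atTop]
      fun T => T * Real.log T := (isLittleO_const_id_atTop _).trans isLittleO_id_mul_log
  simpa only [Pi.add_def,
    intervalIntegral.integral_add_adjacent_intervals (hint a 0) (hint 0 _)] using
    hconst.add_isTheta isTheta_integral_norm_zeta_sq_of_zero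

lemma integral_norm_zetaApprox_sq_le (hT : 2 ≤ T) (hN : 0 < N) (hNT : N ≤ 2 * T) :
    ∫ t in (0 : ℝ)..T, ‖zetaApprox N (criticalLine t)‖ ^ 2 ≤
      (64 * (∑' j : ℤ, (1 + (j : ℝ) ^ 2)⁻¹) + 16 * π) * (T * Real.log T) := by
  have hT_nonneg : 0 ≤ T := two_pos.le.trans hT
  have hcont := continuous_cpow_div_criticalLine hN
  have hadd := integral_norm_add_sq_le hT_nonneg
    (continuous_sum_cpow_neg_criticalLine N).continuousOn hcont.continuousOn
  refine hadd.trans ?_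
  have hcpow : ∫ t in (0 : ℝ)..T, ‖(N : ℂ) ^ (1 - criticalLine t) / (criticalLine t - 1)‖ ^ 2 ≤
      2 * π * (2 * (2 * (T * Real.log T))) := by
    refine (integral_norm_cpow_div_sq_le hN hT_nonneg).trans ?_
    gcongr
    linarith [self_le_two_mul_mul_log hT]
  linarith [integral_norm_sum_cpow_neg_sq_le hT hNT]

lemma exists_integral_norm_zetaApprox_sq_le : ∃ C, 0 ≤ C ∧ ∀ T : ℝ, 2 ≤ T → ∀ N : ℕ, 0 < N →
    ∫ t in (0 : ℝ)..T, ‖zetaApprox N (criticalLine t)‖ ^ 2 ≤ C * (T * Real.log T) := by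
  obtain ⟨C, _, hzeta⟩ := exists_integral_norm_zeta_sq_le
  set K : ℝ := ∑' j : ℤ, (1 + (j : ℝ) ^ 2)⁻¹
  have : 0 ≤ K := by positivity
  refine ⟨max (64 * K + 16 * π) (2 * C + 32 * π), by positivity, fun T hT N hN => ?_⟩
  have hT_nonneg : 0 ≤ T := two_pos.le.trans hT
  have hlog_nonneg : 0 ≤ T * Real.log T :=
    mul_nonneg hT_nonneg (Real.log_nonneg (one_le_two.trans hT))
  rcases le_total (N : ℝ) (2 * T) with hNT | hTN
  · exact (integral_norm_zetaApprox_sq_le hT hN hNT).trans (by gcongr; exact le_max_left _ _)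
  · have hzeta_cont := continuous_zeta_criticalLine.continuousOn (s := Ici 0)
    have hsub := integral_norm_sub_sq_le hT_nonneg hzeta_cont
      (hzeta_cont.sub (continuous_zetaApprox_criticalLine hN).continuousOn)
    simp only [Pi.sub_apply, sub_sub_cancel] at hsub
    calc _ ≤ 2 * (C * (T * Real.log T)) + 2 * (8 * π * (2 * (T * Real.log T))) := by
          refine hsub.trans ?_
          gcongr
          · exact hzeta T hT
          · refine (integral_norm_zeta_sub_zetaApprox_sq_le (one_le_two.trans hT)
              (by linarith)).trans ?_
            gcongr
            exact self_le_two_mul_mul_log hT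
      _ = (2 * C + 32 * π) * (T * Real.log T) := by ring
      _ ≤ _ := by gcongr; exact le_max_right _ _

end CriticalLine

section AbsoluteConvergence

variable {s : ℂ}

lemma norm_LSeries_le_tsum {f : ℕ → ℂ} (hf : ∀ n, ‖f n‖ ≤ 1) (hs : 1 < s.re) :
    ‖LSeries f s‖ ≤ ∑' n : ℕ, (n : ℝ) ^ (-s.re) := by
  refine tsum_of_norm_bounded (Real.summable_nat_rpow.2 (neg_lt_neg hs)).hasSum fun n => ?_
  rw [LSeries.norm_term_eq]
  split_ifs
  · positivity
  · rw [Real.rpow_neg n.cast_nonneg, div_eq_mul_inv]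
    exact mul_le_of_le_one_left (by positivity) (hf n)

lemma tsum_nat_rpow_neg_pos {σ : ℝ} (hσ : 1 < σ) : 0 < ∑' n : ℕ, (n : ℝ) ^ (-σ) :=
  (Real.summable_nat_rpow.2 (neg_lt_neg hσ)).tsum_pos (fun _ => by positivity) 1 (by simp)

lemma norm_zeta_le_tsum (hs : 1 < s.re) : ‖riemannZeta s‖ ≤ ∑' n : ℕ, (n : ℝ) ^ (-s.re) := by
  rw [← LSeries_one_eq_riemannZeta hs]
  exact norm_LSeries_le_tsum (by simp) hs

lemma inv_tsum_le_norm_zeta (hs : 1 < s.re) :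
    (∑' n : ℕ, (n : ℝ) ^ (-s.re))⁻¹ ≤ ‖riemannZeta s‖ := by
  have hmul := ArithmeticFunction.LSeries_zeta_mul_Lseries_moebius hs
  rw [ArithmeticFunction.LSeries_zeta_eq_riemannZeta hs] at hmul
  rw [inv_le_iff_one_le_mul₀ (tsum_nat_rpow_neg_pos hs), ← norm_one (α := ℂ), ← hmul, norm_mul]
  gcongr
  refine norm_LSeries_le_tsum (fun n => ?_) hs
  rw [norm_intCast]
  exact_mod_cast ArithmeticFunction.abs_moebius_le_one

lemma norm_succ_cpow_neg (m : ℕ) (s : ℂ) :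
    ‖((m : ℂ) + 1) ^ (-s)‖ = ((m : ℝ) + 1) ^ (-s.re) := by
  rw [← Nat.cast_add_one, norm_natCast_cpow_of_pos m.succ_pos, neg_re, Nat.cast_succ]

lemma summable_succ_rpow_neg {σ : ℝ} (hσ : 1 < σ) :
    Summable fun m : ℕ => ((m : ℝ) + 1) ^ (-σ) := by
  simpa only [Nat.cast_succ] using
    (summable_nat_add_iff 1).2 (Real.summable_nat_rpow.2 (neg_lt_neg hσ))

lemma summable_succ_cpow_neg (hs : 1 < s.re) : Summable fun m : ℕ => ((m : ℂ) + 1) ^ (-s) :=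
  .of_norm (by simpa only [norm_succ_cpow_neg] using summable_succ_rpow_neg hs)

lemma zeta_eq_tsum_succ_cpow_neg (hs : 1 < s.re) :
    riemannZeta s = ∑' m : ℕ, ((m : ℂ) + 1) ^ (-s) := by
  simp only [zeta_eq_tsum_one_div_nat_add_one_cpow hs, cpow_neg, one_div]

end AbsoluteConvergence

section DoubleZeta

variable {Z : ℂ → ℂ → ℂ} {s s₁ s₂ : ℂ}

/-- The Euler double zeta function on `1 < re s₁`, `0 < re s₂`, written so that the inner series
`∑ n > m, n ^ (-s₂)` is continued to the left of `re s₂ = 1`. -/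
noncomputable def eulerDoubleZeta (s₁ s₂ : ℂ) : ℂ :=
  riemannZeta (s₁ + s₂ - 1) / (s₂ - 1) +
    ∑' m : ℕ, ((m : ℂ) + 1) ^ (-s₁) * (riemannZeta s₂ - zetaApprox (m + 1) s₂)

lemma norm_succ_cpow_neg_mul_zeta_sub_le (s₁ : ℂ) (hs : 0 < s.re) (hs_ne : s ≠ 1) (m : ℕ) :
    ‖((m : ℂ) + 1) ^ (-s₁) * (riemannZeta s - zetaApprox (m + 1) s)‖ ≤
      ((m : ℝ) + 1) ^ (-s₁.re) * (‖s‖ / s.re) := by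
  rw [norm_mul, norm_succ_cpow_neg]
  gcongr
  exact norm_zeta_sub_zetaApprox_le m.succ_pos hs hs_ne

lemma summable_succ_cpow_neg_mul_zeta_sub (hs₁ : 1 < s₁.re) (hs : 0 < s.re) (hs_ne : s ≠ 1) :
    Summable fun m : ℕ =>
      ((m : ℂ) + 1) ^ (-s₁) * (riemannZeta s - zetaApprox (m + 1) s) :=
  .of_norm_bounded ((summable_succ_rpow_neg hs₁).mul_right _)
    (norm_succ_cpow_neg_mul_zeta_sub_le s₁ hs hs_ne)

lemma differentiableAt_tsum_succ_cpow_neg_mul_zeta_sub (hs₁ : 1 < s₁.re) (hs : 0 < s.re)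
    (hs_ne : s ≠ 1) :
    DifferentiableAt ℂ (fun z => ∑' m : ℕ,
      ((m : ℂ) + 1) ^ (-s₁) * (riemannZeta z - zetaApprox (m + 1) z)) s := by
  let U : Set ℂ := {z | s.re / 2 < z.re} ∩ ({z | ‖z‖ < ‖s‖ + 1} ∩ {1}ᶜ)
  have hU : IsOpen U := (isOpen_lt continuous_const continuous_re).inter
    ((isOpen_lt continuous_norm continuous_const).inter isOpen_compl_singleton)
  have hsU : s ∈ U := ⟨half_lt_self hs, lt_add_one ‖s‖, hs_ne⟩
  refine (differentiableOn_tsum_of_summable_norm (U := U)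
    ((summable_succ_rpow_neg hs₁).mul_right ((‖s‖ + 1) / (s.re / 2))) (fun m z hz => ?_) hU
    fun m z hz => ?_).differentiableAt (hU.mem_nhds hsU)
  · exact (((differentiableAt_riemannZeta hz.2.2).sub
      (differentiableAt_zetaApprox m.succ_pos hz.2.2)).const_mul _).differentiableWithinAt
  · have hz_re : s.re / 2 < z.re := hz.1
    have hz_norm : ‖z‖ < ‖s‖ + 1 := hz.2.1
    refine (norm_succ_cpow_neg_mul_zeta_sub_le s₁ ((half_pos hs).trans hz_re) hz.2.2 m).trans ?_
    gcongr

lemma tsum_mul_tsum_eq_eulerDoubleZeta (hs₁ : 1 < s₁.re) (hs₂ : 1 < s₂.re) :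
    ∑' m : ℕ, ((m : ℂ) + 1) ^ (-s₁) * ∑' n : ℕ, (((m : ℂ) + 1) + ((n : ℂ) + 1)) ^ (-s₂) =
      eulerDoubleZeta s₁ s₂ := by
  have hs₂_ne : s₂ ≠ 1 := ne_of_apply_ne re (by simpa using hs₂.ne')
  have hsum_re : 1 < (s₁ + s₂ - 1).re := by
    rw [sub_re, add_re, one_re]
    linarith
  rw [eulerDoubleZeta, zeta_eq_tsum_succ_cpow_neg hsum_re, ← tsum_div_const, ← Summable.tsum_add
    ((summable_succ_cpow_neg hsum_re).div_const _)
    (summable_succ_cpow_neg_mul_zeta_sub hs₁ (one_pos.trans hs₂) hs₂_ne)]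
  refine tsum_congr fun m => ?_
  have hpow : ((m : ℂ) + 1) ^ (-(s₁ + s₂ - 1)) =
      ((m : ℂ) + 1) ^ (-s₁) * ((m : ℂ) + 1) ^ (1 - s₂) := by
    rw [← cpow_add _ _ m.cast_add_one_ne_zero]
    ring_nf
  have htail := tsum_add_succ_cpow_neg hs₂ (m + 1)
  push_cast at htail
  rw [htail, hpow, zetaApprox]
  push_cast
  ring

lemma differentiableAt_eulerDoubleZeta (hs₁ : 1 < s₁.re) (hs : 0 < s.re) (hs_ne : s ≠ 1)
    (hsum : s₁ + s - 1 ≠ 1) : DifferentiableAt ℂ (eulerDoubleZeta s₁) s := by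
  have hzeta : DifferentiableAt ℂ (fun z => riemannZeta (s₁ + z - 1)) s :=
    (differentiableAt_riemannZeta hsum).comp (f := fun z => s₁ + z - 1) s (by fun_prop)
  have hquot : DifferentiableAt ℂ (fun z => riemannZeta (s₁ + z - 1) / (z - 1)) s :=
    hzeta.fun_div (by fun_prop) (sub_ne_zero.2 hs_ne)
  exact hquot.fun_add (differentiableAt_tsum_succ_cpow_neg_mul_zeta_sub hs₁ hs hs_ne)

lemma not_zeta2Sing_of_im_pos (hs₁ : 0 < s₁.im) (hs₂ : 0 < s₂.im) : ¬zeta2Sing (s₁, s₂) := by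
  have hsum : (s₁ + s₂).im ≠ 0 := (add_pos hs₁ hs₂).ne'
  rintro (h | h | h | ⟨k, h⟩) <;> simp_all

theorem eq_eulerDoubleZeta_of_im_pos
    (hZa : AnalyticOnNhd ℂ (fun p : ℂ × ℂ => Z p.1 p.2) {p | ¬zeta2Sing p})
    (hZs : ∀ s₁ s₂ : ℂ, 1 < s₂.re → 2 < s₁.re + s₂.re →
      Z s₁ s₂ = ∑' m : ℕ, ((m : ℂ) + 1) ^ (-s₁) *
        ∑' n : ℕ, (((m : ℂ) + 1) + ((n : ℂ) + 1)) ^ (-s₂))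
    (hs₁ : 1 < s₁.re) (hs₁_im : 0 < s₁.im) (hs₂ : 0 < s₂.re) (hs₂_im : 0 < s₂.im) :
    Z s₁ s₂ = eulerDoubleZeta s₁ s₂ := by
  -- The quadrant avoids the singular set and contains `s₂ + 1`, near which `Z s₁` is a series.
  let U : Set ℂ := {z | 0 < z.re} ∩ {z | 0 < z.im}
  have hU : IsOpen U :=
    (isOpen_lt continuous_const continuous_re).inter (isOpen_lt continuous_const continuous_im)
  have hU_conn : IsPreconnected U :=
    ((convex_halfSpace_re_gt 0).inter (convex_halfSpace_im_gt 0)).isPreconnected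
  have hne_one {z : ℂ} (hz : 0 < z.im) : z ≠ 1 := ne_of_apply_ne im (by simpa using hz.ne')
  have hZ : AnalyticOnNhd ℂ (Z s₁) U := fun z hz =>
    (hZa (s₁, z) (not_zeta2Sing_of_im_pos hs₁_im hz.2)).comp₂ analyticAt_const analyticAt_id
  have heuler : AnalyticOnNhd ℂ (eulerDoubleZeta s₁) U := by
    refine DifferentiableOn.analyticOnNhd (fun z ⟨hz_re, hz_im⟩ => ?_) hU
    have hsum_im : 0 < (s₁ + z - 1).im := by simpa using add_pos hs₁_im hz_im
    exact (differentiableAt_eulerDoubleZeta hs₁ hz_re (hne_one hz_im)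
      (hne_one hsum_im)).differentiableWithinAt
  have hagree : Z s₁ =ᶠ[𝓝 (s₂ + 1)] eulerDoubleZeta s₁ := by
    have hre : ∀ᶠ z in 𝓝 (s₂ + 1), 1 < z.re :=
      (isOpen_lt continuous_const continuous_re).mem_nhds (by simpa using hs₂)
    filter_upwards [hre] with z hz
    rw [hZs s₁ z hz (by linarith), tsum_mul_tsum_eq_eulerDoubleZeta hs₁ hz]
  have hs₂U : s₂ + 1 ∈ U := by
    constructor <;> simp only [mem_ofPred, add_re, one_re, add_im, one_im] <;> linarith
  exact hZ.eqOn_of_preconnected_of_eventuallyEq heuler hU_conn hs₂U hagree ⟨hs₂, hs₂_im⟩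

/-- The difference `ζ₂(s₁, s₂) - ζ(s₁) ζ(s₂)`, that is `-ζ₂(s₂, s₁) - ζ(s₁ + s₂)` by the harmonic
product, in a form in which it is bounded through mean values of `zetaApprox`. -/
noncomputable def doubleZetaError (s₁ s₂ : ℂ) : ℂ :=
  riemannZeta (s₁ + s₂ - 1) / (s₂ - 1) -
    ∑' m : ℕ, ((m : ℂ) + 1) ^ (-s₁) * zetaApprox (m + 1) s₂

lemma eulerDoubleZeta_eq_zeta_mul_zeta_add (hs₁ : 1 < s₁.re) (hs₂ : 0 < s₂.re)
    (hs₂_ne : s₂ ≠ 1) :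
    eulerDoubleZeta s₁ s₂ = riemannZeta s₁ * riemannZeta s₂ + doubleZetaError s₁ s₂ := by
  have hzeta := (summable_succ_cpow_neg hs₁).mul_right (riemannZeta s₂)
  have hsub := summable_succ_cpow_neg_mul_zeta_sub hs₁ hs₂ hs₂_ne
  have happrox : ∑' m : ℕ, ((m : ℂ) + 1) ^ (-s₁) * zetaApprox (m + 1) s₂ =
      riemannZeta s₁ * riemannZeta s₂ -
        ∑' m : ℕ, ((m : ℂ) + 1) ^ (-s₁) * (riemannZeta s₂ - zetaApprox (m + 1) s₂) := by
    rw [zeta_eq_tsum_succ_cpow_neg hs₁, ← tsum_mul_right, ← hzeta.tsum_sub hsub]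
    exact tsum_congr fun m => by ring
  rw [eulerDoubleZeta, doubleZetaError, happrox]
  ring

end DoubleZeta

section DoubleZetaMeanSquare

variable {σ : ℝ}

lemma norm_zeta_div_le (hσ : 1 ≤ σ) {t : ℝ} (ht : 1 ≤ t) :
    ‖riemannZeta (σ + t * I + criticalLine t - 1) / (criticalLine t - 1)‖ ≤ 7 := by
  have hre : (σ + t * I + criticalLine t - 1).re = σ - 1 / 2 := by
    simp only [sub_re, add_re, re_ofReal_mul, ofReal_re, I_re, criticalLine_re, one_re]
    ring
  have him : (σ + t * I + criticalLine t - 1).im = 2 * t := by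
    simp only [sub_im, add_im, im_ofReal_mul, ofReal_im, I_im, criticalLine_im, one_im]
    ring
  have hden : t ≤ ‖criticalLine t - 1‖ := by simpa using im_le_norm (criticalLine t - 1)
  have hnum : ‖riemannZeta (σ + t * I + criticalLine t - 1)‖ ≤ 3 + 2 * t / (σ - 1 / 2) := by
    simpa only [hre, him] using norm_zeta_le_add_im_div (s := σ + t * I + criticalLine t - 1)
      (by rw [hre]; linarith) (by rw [him]; linarith)
  have hfrac : 2 * t / (σ - 1 / 2) ≤ 4 * t := by
    rw [div_le_iff₀ (by linarith)]
    nlinarith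
  rw [norm_div, div_le_iff₀ (by linarith)]
  linarith

lemma continuousOn_zeta_div (σ : ℝ) : ContinuousOn (fun t : ℝ =>
    riemannZeta (σ + t * I + criticalLine t - 1) / (criticalLine t - 1)) (Ioi 0) := fun t ht => by
  have hline := continuous_criticalLine
  have hne : (σ + t * I + criticalLine t - 1 : ℂ) ≠ 1 :=
    ne_of_apply_ne im (by simpa using (add_pos ht.out ht.out).ne')
  have hzeta : ContinuousAt (fun t : ℝ => riemannZeta (σ + t * I + criticalLine t - 1)) t :=
    (differentiableAt_riemannZeta hne).continuousAt.comp
      (f := fun t : ℝ => (σ + t * I + criticalLine t - 1 : ℂ)) (by fun_prop)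
  exact (hzeta.div (by fun_prop)
    (sub_ne_zero.2 (criticalLine_ne_one t))).continuousWithinAt

lemma exists_norm_zetaApprox_criticalLine_le (a b : ℝ) :
    ∃ K, ∀ N : ℕ, 0 < N → ∀ t ∈ Icc a b, ‖zetaApprox N (criticalLine t)‖ ≤ K := by
  obtain ⟨K, hK⟩ := isCompact_Icc.exists_bound_of_continuousOn (s := Icc a b)
    (f := fun t => ‖riemannZeta (criticalLine t)‖ + ‖criticalLine t‖ / (criticalLine t).re)
    (continuous_zeta_criticalLine.norm.add (continuous_criticalLine.norm.div
      (continuous_re.comp continuous_criticalLine)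
      fun t => (criticalLine_re_pos t).ne')).continuousOn
  refine ⟨K, fun N hN t ht => le_trans ?_ ((Real.le_norm_self _).trans (hK t ht))⟩
  calc ‖zetaApprox N (criticalLine t)‖
      ≤ ‖riemannZeta (criticalLine t)‖ +
          ‖riemannZeta (criticalLine t) - zetaApprox N (criticalLine t)‖ :=
        norm_le_norm_add_norm_sub _ _
    _ ≤ _ := by
        gcongr
        exact norm_zeta_sub_zetaApprox_le hN (criticalLine_re_pos t) (criticalLine_ne_one t)

lemma isLittleO_integral_norm_zetaApprox_sq {N : ℕ} (hN : 0 < N) :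
    (fun T => ∫ t in 2..T, ‖zetaApprox N (criticalLine t)‖ ^ 2)
      =o[atTop] fun T => T * Real.log T := by
  refine (isBigO_integral_norm_sq_id (C := N + N) fun t ht => ?_).trans_isLittleO
    isLittleO_id_mul_log
  have hden : 1 ≤ ‖criticalLine t - 1‖ :=
    calc (1 : ℝ) ≤ (criticalLine t - 1).im := by simpa using one_le_two.trans ht.out
      _ ≤ ‖criticalLine t - 1‖ := im_le_norm _
  refine (norm_zetaApprox_le hN (criticalLine_re_pos t).le).trans ?_
  gcongr
  exact div_le_self N.cast_nonneg hden

lemma norm_succ_cpow_neg_add_mul_I (m : ℕ) (t : ℝ) :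
    ‖((m : ℂ) + 1) ^ (-(σ + t * I : ℂ))‖ = ((m : ℝ) + 1) ^ (-σ) := by
  rw [norm_succ_cpow_neg, add_re, re_ofReal_mul, I_re, mul_zero, ofReal_re, add_zero]

lemma continuousOn_tsum_succ_cpow_neg_mul_zetaApprox (hσ : 1 < σ) (a : ℝ) :
    ContinuousOn (fun t : ℝ => ∑' m : ℕ, ((m : ℂ) + 1) ^ (-(σ + t * I : ℂ)) *
      zetaApprox (m + 1) (criticalLine t)) (Ici a) := by
  refine continuousOn_tsum_mul (summable_succ_rpow_neg hσ)
    (fun m t => (norm_succ_cpow_neg_add_mul_I m t).le) (fun m => ?_)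
    (fun m => (continuous_zetaApprox_criticalLine m.succ_pos).continuousOn) fun b => ?_
  · exact (by fun_prop : Continuous fun t : ℝ => (-(σ + t * I) : ℂ)).const_cpow
      (Or.inl m.cast_add_one_ne_zero)
  · obtain ⟨K, hK⟩ := exists_norm_zetaApprox_criticalLine_le a b
    exact ⟨K, fun m => hK (m + 1) m.succ_pos⟩

lemma isLittleO_integral_norm_tsum_succ_cpow_neg_mul_zetaApprox_sq (hσ : 1 < σ) :
    (fun T => ∫ t in 2..T, ‖∑' m : ℕ, ((m : ℂ) + 1) ^ (-(σ + t * I : ℂ)) *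
      zetaApprox (m + 1) (criticalLine t)‖ ^ 2) =o[atTop] fun T => T * Real.log T := by
  obtain ⟨C, hC, hmean⟩ := exists_integral_norm_zetaApprox_sq_le
  have hw := summable_succ_rpow_neg hσ
  have hbound : ∀ᶠ T : ℝ in atTop, ∀ m : ℕ,
      ‖∫ t in 2..T, ‖zetaApprox (m + 1) (criticalLine t)‖ ^ 2‖ ≤ C * ‖T * Real.log T‖ := by
    filter_upwards [eventually_ge_atTop 2] with T hT m
    have hcont := (continuous_zetaApprox_criticalLine m.succ_pos).norm.pow 2
    rw [Real.norm_of_nonneg (integral_norm_sq_nonneg hT _)]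
    calc _ ≤ ∫ t in 0..T, ‖zetaApprox (m + 1) (criticalLine t)‖ ^ 2 :=
          intervalIntegral.integral_mono_interval zero_le_two hT le_rfl
            (ae_of_all _ fun t => sq_nonneg _) (hcont.intervalIntegrable _ _)
      _ ≤ C * (T * Real.log T) := hmean T hT (m + 1) m.succ_pos
      _ ≤ C * ‖T * Real.log T‖ := by
          gcongr
          exact Real.le_norm_self _
  have hmajorant := (isLittleO_tsum_mul hw hC
    (fun m => isLittleO_integral_norm_zetaApprox_sq m.succ_pos) hbound).const_mul_left
      (∑' m : ℕ, ((m : ℝ) + 1) ^ (-σ))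
  refine (IsBigO.of_bound' ?_).trans_isLittleO hmajorant
  filter_upwards [eventually_ge_atTop 2] with T hT
  obtain ⟨K, hK⟩ := exists_norm_zetaApprox_criticalLine_le 2 T
  rw [Real.norm_of_nonneg (integral_norm_sq_nonneg hT _)]
  exact (integral_norm_tsum_mul_sq_le hT hw (fun m t => (norm_succ_cpow_neg_add_mul_I m t).le)
    (fun m => (continuous_zetaApprox_criticalLine m.succ_pos).continuousOn)
    fun m => hK (m + 1) m.succ_pos).trans (Real.le_norm_self _)

lemma continuousOn_doubleZetaError (hσ : 1 < σ) :
    ContinuousOn (fun t : ℝ => doubleZetaError (σ + t * I) (criticalLine t)) (Ici 2) :=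
  ((continuousOn_zeta_div σ).mono (Ici_subset_Ioi.2 two_pos)).sub
    (continuousOn_tsum_succ_cpow_neg_mul_zetaApprox hσ 2)

lemma isLittleO_integral_norm_doubleZetaError_sq (hσ : 1 < σ) :
    (fun T => ∫ t in 2..T, ‖doubleZetaError (σ + t * I) (criticalLine t)‖ ^ 2)
      =o[atTop] fun T => T * Real.log T := by
  have hquot := (isBigO_integral_norm_sq_id (a := 2) fun t (ht : 2 ≤ t) =>
    norm_zeta_div_le hσ.le (one_le_two.trans ht)).trans_isLittleO isLittleO_id_mul_log
  have hsum := isLittleO_integral_norm_tsum_succ_cpow_neg_mul_zetaApprox_sq hσ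
  have hadd := isBigO_integral_norm_add_sq
    ((continuousOn_zeta_div σ).mono (Ici_subset_Ioi.2 two_pos))
    (continuousOn_tsum_succ_cpow_neg_mul_zetaApprox hσ 2).neg
  simp only [Pi.neg_apply, norm_neg, ← sub_eq_add_neg] at hadd
  exact hadd.trans_isLittleO (hquot.add hsum)

lemma continuous_zeta_add_mul_I (hσ : 1 < σ) : Continuous fun t : ℝ => riemannZeta (σ + t * I) :=
  continuous_iff_continuousAt.2 fun t =>
    (differentiableAt_riemannZeta (ne_of_apply_ne re (by simpa using hσ.ne'))).continuousAt.comp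
      (f := fun t : ℝ => (σ + t * I : ℂ)) (by fun_prop)

lemma isTheta_integral_norm_zeta_mul_zeta_sq (hσ : 1 < σ) (a : ℝ) :
    (fun T => ∫ t in a..T, ‖riemannZeta (σ + t * I) * riemannZeta (criticalLine t)‖ ^ 2)
      =Θ[atTop] fun T => T * Real.log T := by
  have hre (t : ℝ) : (σ + t * I : ℂ).re = σ := by simp
  have hlower (t : ℝ) : (∑' n : ℕ, (n : ℝ) ^ (-σ))⁻¹ ≤ ‖riemannZeta (σ + t * I)‖ := by
    simpa only [hre] using inv_tsum_le_norm_zeta (s := σ + t * I) (by rwa [hre])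
  have hupper (t : ℝ) : ‖riemannZeta (σ + t * I)‖ ≤ ∑' n : ℕ, (n : ℝ) ^ (-σ) := by
    simpa only [hre] using norm_zeta_le_tsum (s := σ + t * I) (by rwa [hre])
  exact (isTheta_integral_norm_mul_sq (inv_pos.2 (tsum_nat_rpow_neg_pos hσ)) (fun t _ => hlower t)
    (fun t _ => hupper t) (continuous_zeta_add_mul_I hσ).continuousOn
    continuous_zeta_criticalLine.continuousOn).trans (isTheta_integral_norm_zeta_sq a)

end DoubleZetaMeanSquare

/-- Diagonal mean square of ζ₂ for σ₁ > 1, σ₂ = 1/2 (from Theorem 1.3). -/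
theorem stmt19 (Z : ℂ → ℂ → ℂ)
    (hZa : AnalyticOnNhd ℂ (fun p : ℂ × ℂ => Z p.1 p.2) {p | ¬ zeta2Sing p})
    (hZs : ∀ s₁ s₂ : ℂ, 1 < s₂.re → 2 < s₁.re + s₂.re →
      Z s₁ s₂ = ∑' m : ℕ, ((m : ℂ) + 1) ^ (-s₁)
        * ∑' n : ℕ, (((m : ℂ) + 1) + ((n : ℂ) + 1)) ^ (-s₂))
    (σ₁ : ℝ) (h : 1 < σ₁) :
    (fun T : ℝ =>
        ∫ t in (2:ℝ)..T, ‖Z ((σ₁ : ℂ) + t * Complex.I) ((1/2 : ℂ) + t * Complex.I)‖ ^ 2)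
      =Θ[atTop] (fun T : ℝ => T * Real.log T) := by
  have hdecomp : ∀ t ∈ Ici (2 : ℝ), Z (σ₁ + t * I) (1 / 2 + t * I) =
      riemannZeta (σ₁ + t * I) * riemannZeta (criticalLine t) +
        doubleZetaError (σ₁ + t * I) (criticalLine t) := fun t ht => by
    have ht_pos : 0 < t := two_pos.trans_le ht
    have hre : 1 < (σ₁ + t * I : ℂ).re := by simpa using h
    rw [← eulerDoubleZeta_eq_zeta_mul_zeta_add hre (criticalLine_re_pos t) (criticalLine_ne_one t)]
    exact eq_eulerDoubleZeta_of_im_pos hZa hZs hre (by simpa using ht_pos)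
      (criticalLine_re_pos t) (by simpa using ht_pos)
  have hcongr : (fun T : ℝ => ∫ t in 2..T, ‖Z (σ₁ + t * I) (1 / 2 + t * I)‖ ^ 2) =ᶠ[atTop]
      fun T => ∫ t in 2..T, ‖riemannZeta (σ₁ + t * I) * riemannZeta (criticalLine t) +
        doubleZetaError (σ₁ + t * I) (criticalLine t)‖ ^ 2 := by
    filter_upwards [eventually_ge_atTop 2] with T hT
    refine intervalIntegral.integral_congr fun t ht => ?_
    simp only [hdecomp t (uIcc_of_le hT ▸ ht).1]
  exact hcongr.trans_isTheta (isTheta_integral_norm_add_sq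
    ((continuous_zeta_add_mul_I h).mul continuous_zeta_criticalLine).continuousOn
    (continuousOn_doubleZetaError h) (isTheta_integral_norm_zeta_mul_zeta_sq h 2)
    (isLittleO_integral_norm_doubleZetaError_sq h))
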